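/- arXiv:0911.4838 — 4 statements merged into one kernel-verified Lean document; each statement's English description precedes it below -/
import Mathlib

section
/- For every C₁ > 0 there exist positive constants B₀ and C₀ (independent of m) such that for all m ∈ ℤ with |δ̃₁| < C₁, all B > B₀, and all ψ in the form domain of q_m: q_m[ψ] ≥ (Θ₀ + λ₁^{ℳ̃}(δ̃₁)·B^{−1/3} − C₀·B^{−3/8})·‖ψ‖². -/
noncomputable section
open MeasureTheory Real Filter Set Topology

/-- The de Gennes energy `λ₁^𝒢(ξ)`. -/
def deGennes (ξ : ℝ) : ℝ :=
  sInf { q : ℝ | ∃ u : ℝ → ℂ, ContDiff ℝ 1 u ∧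
    IntegrableOn (fun t => ‖u t‖ ^ 2) (Ioi 0) ∧
    IntegrableOn (fun t => ‖deriv u t‖ ^ 2 + (t + ξ) ^ 2 * ‖u t‖ ^ 2) (Ioi 0) ∧
    0 < (∫ t in Ioi (0:ℝ), ‖u t‖ ^ 2) ∧
    q = (∫ t in Ioi (0:ℝ), (‖deriv u t‖ ^ 2 + (t + ξ) ^ 2 * ‖u t‖ ^ 2)) /
        ∫ t in Ioi (0:ℝ), ‖u t‖ ^ 2 }

/-- `Θ₀`, the infimum of the de Gennes energy. -/
def Theta0 : ℝ := ⨅ ξ : ℝ, deGennes ξ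

/-- The half plane `ℝ²₊ = {(τ, ρ) : τ > 0}`. -/
def halfPlane : Set (ℝ × ℝ) := Ioi (0:ℝ) ×ˢ (univ : Set ℝ)

/-- The potential of the effective operator `Q_m(B)`. -/
def qPot (B : ℝ) (m : ℤ) (p : ℝ × ℝ) : ℝ :=
  (p.1 + ((m : ℝ) - B / 2) / Real.sqrt B + B ^ (-(1:ℝ)/6) * p.2 ^ 2 / 2) ^ 2

/-- The integrand of the quadratic form `q_m`. -/
def qIntegrand (B : ℝ) (m : ℤ) (ψ : ℝ × ℝ → ℂ) (p : ℝ × ℝ) : ℝ :=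
  ‖fderiv ℝ ψ p (1, 0)‖ ^ 2 + qPot B m p * ‖ψ p‖ ^ 2
    + B ^ (-(1:ℝ)/3) * ‖fderiv ℝ ψ p (0, 1)‖ ^ 2

/-- The quadratic form `q_m[ψ]`. -/
def qForm (B : ℝ) (m : ℤ) (ψ : ℝ × ℝ → ℂ) : ℝ :=
  ∫ p in halfPlane, qIntegrand B m ψ p

/-- Membership in the form domain of `q_m`. -/
def InFormDomain (B : ℝ) (m : ℤ) (ψ : ℝ × ℝ → ℂ) : Prop :=
  ContDiff ℝ 1 ψ ∧ IntegrableOn (fun p => ‖ψ p‖ ^ 2) halfPlane ∧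
    IntegrableOn (qIntegrand B m ψ) halfPlane

/-- The rescaled momentum `δ̃₁ = ((m - B/2)/√B - ξ₀)·B^{1/6}`. -/
def delta1 (B : ℝ) (m : ℤ) (ξ₀ : ℝ) : ℝ :=
  (((m : ℝ) - B / 2) / Real.sqrt B - ξ₀) * B ^ ((1:ℝ)/6)

/-- Second derivative in the `τ` direction. -/
def d2τ (ψ : ℝ × ℝ → ℂ) (p : ℝ × ℝ) : ℂ :=
  fderiv ℝ (fun q => fderiv ℝ ψ q ((1:ℝ), (0:ℝ))) p (1, 0)

/-- Second derivative in the `ρ` direction. -/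
def d2ρ (ψ : ℝ × ℝ → ℂ) (p : ℝ × ℝ) : ℂ :=
  fderiv ℝ (fun q => fderiv ℝ ψ q ((0:ℝ), (1:ℝ))) p (0, 1)

/-- An eigenfunction of the model operator `Q_m(B)` on the half plane, with Neumann
boundary condition at `τ = 0`, eigenvalue `lam`, which is nonzero, smooth up to the
boundary, and lies in `L²` together with its first derivatives. -/
def IsQEigenfunction (B : ℝ) (m : ℤ) (lam : ℝ) (ψ : ℝ × ℝ → ℂ) : Prop :=
  ContDiff ℝ (⊤ : ℕ∞) ψ ∧
  IntegrableOn (fun p => ‖ψ p‖ ^ 2) halfPlane ∧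
  IntegrableOn (fun p => ‖fderiv ℝ ψ p ((1:ℝ), (0:ℝ))‖ ^ 2) halfPlane ∧
  IntegrableOn (fun p => ‖fderiv ℝ ψ p ((0:ℝ), (1:ℝ))‖ ^ 2) halfPlane ∧
  0 < (∫ p in halfPlane, ‖ψ p‖ ^ 2) ∧
  (∀ p ∈ halfPlane,
    -d2τ ψ p - ((B ^ (-(1:ℝ)/3) : ℝ) : ℂ) * d2ρ ψ p + ((qPot B m p : ℝ) : ℂ) * ψ p
      = (lam : ℂ) * ψ p) ∧
  (∀ ρ : ℝ, fderiv ℝ ψ ((0:ℝ), ρ) ((1:ℝ), (0:ℝ)) = 0)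

/-- The modified Montgomery energy `λ₁^{ℳ̃}(ζ)` (with coupling `δ₀`). -/
def montgomeryMod (δ₀ ζ : ℝ) : ℝ :=
  sInf { q : ℝ | ∃ u : ℝ → ℂ, ContDiff ℝ 1 u ∧
    Integrable (fun ρ => ‖u ρ‖ ^ 2) ∧
    Integrable (fun ρ => ‖deriv u ρ‖ ^ 2 + δ₀ * (ζ + ρ ^ 2 / 2) ^ 2 * ‖u ρ‖ ^ 2) ∧
    0 < (∫ ρ : ℝ, ‖u ρ‖ ^ 2) ∧
    q = (∫ ρ : ℝ, (‖deriv u ρ‖ ^ 2 + δ₀ * (ζ + ρ ^ 2 / 2) ^ 2 * ‖u ρ‖ ^ 2)) /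
        ∫ ρ : ℝ, ‖u ρ‖ ^ 2 }

/-!
For fixed `ρ` the transverse part of `q_m` is bounded below by the de Gennes energy at
`ξ₀ + B ^ (-1/6) * (δ̃₁ + ρ² / 2)`, which leaves a one-dimensional Schrödinger operator in `ρ` whose
potential, in units of `B ^ (-1/3)`, is compared with the Montgomery potential
`δ₀ * (δ̃₁ + ρ² / 2) ^ 2` after an IMS partition of unity at the scale `ρ ~ B ^ (1/48)`. There the
localization error and the cubic remainder of the de Gennes energy at `ξ₀` are both of relative
order `B ^ (-1/24)`, hence `B ^ (-3/8)` in total; far away the potential exceeds `λ₁^ℳ̃`.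

The cubic lower bound at `ξ₀` needs no eigenfunctions or compactness. The energy is an infimum of
quadratic polynomials in `ξ`, so `λ₁^𝒢 - ξ²` is concave. Near-minimizers at `ξ₀` split off a
vector which carries almost no excess energy and a remainder vanishing at a fixed interior point.
By Poincaré's inequality on one side of that point and translation to the half-line on the other,
the uniqueness of `ξ₀` yields a spectral gap for such remainders, and second-order perturbation
theory for the form applies.
-/

section SecondDerivative

variable {f : ℝ → ℝ} {x₀ : ℝ}

lemma eventually_differentiableAt_of_deriv_deriv_ne_zero (hf'' : deriv (deriv f) x₀ ≠ 0) :
    ∀ᶠ x in 𝓝[≠] x₀, DifferentiableAt ℝ f x := by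
  have hd : HasDerivAt (deriv f) (deriv (deriv f) x₀) x₀ :=
    (differentiableAt_of_deriv_ne_zero hf'').hasDerivAt
  filter_upwards [hd.eventually_ne hf'' (c := 0)] with x hx
  exact differentiableAt_of_deriv_ne_zero hx

/-- When `f` is not differentiable at `x₀`, both derivatives take the junk value `0` there. -/
lemma deriv_sub_const_mul_sq_eventuallyEq (hf' : deriv f x₀ = 0) (hf'' : deriv (deriv f) x₀ ≠ 0)
    (d : ℝ) :
    deriv (fun x => f x - d * (x - x₀) ^ 2) =ᶠ[𝓝 x₀] fun x => deriv f x - 2 * d * (x - x₀) := by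
  have hpoly : ∀ x, HasDerivAt (fun x => d * (x - x₀) ^ 2) (2 * d * (x - x₀)) x := fun x => by
    simpa [mul_comm, mul_assoc, mul_left_comm] using
      (((hasDerivAt_id x).sub_const x₀).pow 2).const_mul d
  have hdiff : ∀ x, DifferentiableAt ℝ f x →
      deriv (fun x => f x - d * (x - x₀) ^ 2) x = deriv f x - 2 * d * (x - x₀) :=
    fun x hx => (hx.hasDerivAt.sub (hpoly x)).deriv
  have hoff := eventually_differentiableAt_of_deriv_deriv_ne_zero hf''
  filter_upwards [eventually_nhdsWithin_iff.1 hoff] with x hx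
  by_cases hfx : DifferentiableAt ℝ f x
  · exact hdiff x hfx
  obtain rfl : x = x₀ := by_contra fun h => hfx (hx h)
  have hg : ¬ DifferentiableAt ℝ (fun y => f y - d * (y - x) ^ 2) x := fun h => by
    have hsum := h.fun_add (hpoly x).differentiableAt
    simp only [sub_add_cancel] at hsum
    exact hfx hsum
  rw [deriv_zero_of_not_differentiableAt hg, hf']
  ring

lemma eventually_add_mul_sq_le_of_deriv_deriv (hf : ContinuousAt f x₀) (hf' : deriv f x₀ = 0)
    (hf'' : 0 < deriv (deriv f) x₀) {d : ℝ} (hd : d < 1 / 2 * deriv (deriv f) x₀) :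
    ∀ᶠ x in 𝓝 x₀, f x₀ + d * (x - x₀) ^ 2 ≤ f x := by
  have hderiv := deriv_sub_const_mul_sq_eventuallyEq hf' hf''.ne' d
  have hsecond : HasDerivAt (fun x => deriv f x - 2 * d * (x - x₀))
      (deriv (deriv f) x₀ - 2 * d) x₀ := by
    have hlin := ((hasDerivAt_id x₀).sub_const x₀).const_mul (2 * d)
    simpa using (differentiableAt_of_deriv_ne_zero hf''.ne').hasDerivAt.fun_sub hlin
  have hmin : IsLocalMin (fun x => f x - d * (x - x₀) ^ 2) x₀ := by
    refine isLocalMin_of_deriv_deriv_pos ?_ ?_ (by fun_prop)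
    · rw [hderiv.deriv_eq, hsecond.deriv]
      linarith
    · rw [hderiv.eq_of_nhds, hf']
      ring
  filter_upwards [hmin] with x hx
  simp only [sub_self] at hx
  linarith

end SecondDerivative

section QuadraticPerturbation

open QuadraticMap

variable {E : Type*} [AddCommGroup E] [Module ℝ E] {p w n Q : QuadraticForm ℝ E}

lemma quadraticForm_add_smul (Q : QuadraticForm ℝ E) (x y : E) (t : ℝ) :
    Q (x + t • y) = Q x + t * polar Q x y + t ^ 2 * Q y := by
  rw [QuadraticMap.map_add Q, QuadraticMap.map_smul, QuadraticMap.polar_smul_right]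
  simp only [smul_eq_mul]
  ring

lemma abs_polar_le (hQ : ∀ u, 0 ≤ Q u) (x y : E) {t : ℝ} (ht : 0 < t) :
    |polar Q x y| ≤ t * Q x + t⁻¹ * Q y := by
  have hplus := quadraticForm_add_smul Q x y t⁻¹ ▸ hQ (x + t⁻¹ • y)
  have hminus := quadraticForm_add_smul Q x y (-t⁻¹) ▸ hQ (x + (-t⁻¹) • y)
  have key : ∀ a b c : ℝ, 0 ≤ a + t⁻¹ * b + t⁻¹ ^ 2 * c → -b ≤ t * a + t⁻¹ * c := by
    intro a b c h
    have := mul_nonneg ht.le h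
    field_simp at this ⊢
    linarith
  rw [abs_le']
  refine ⟨?_, key _ _ _ hplus⟩
  simpa using key _ (-polar Q x y) _ (by simpa using hminus)

lemma abs_map_add_smul_sub_le (hn : ∀ u, 0 ≤ n u) (x y : E) {ε t : ℝ} (hε : 0 < ε) (ht : 0 < t) :
    |n (x + ε • y) - n x| ≤ ε * t * n x + (ε * t⁻¹ + ε ^ 2) * n y := by
  have hpolar := mul_le_mul_of_nonneg_left (abs_polar_le hn x y ht) hε.le
  rw [quadraticForm_add_smul, add_assoc, add_sub_cancel_left]
  calc |ε * polar n x y + ε ^ 2 * n y| ≤ |ε * polar n x y| + |ε ^ 2 * n y| := abs_add_le _ _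
    _ = ε * |polar n x y| + ε ^ 2 * n y := by
      rw [abs_mul, abs_of_pos hε, abs_of_nonneg (mul_nonneg (sq_nonneg ε) (hn y))]
    _ ≤ _ := by linarith

lemma abs_le_of_pencil_nonneg (hpencil : ∀ σ u, 0 ≤ p u + σ * w u + σ ^ 2 * n u) (u : E) {t : ℝ}
    (ht : 0 < t) : |w u| ≤ t⁻¹ * p u + t * n u := by
  have key : ∀ b : ℝ, 0 ≤ p u + t * b + t ^ 2 * n u → -b ≤ t⁻¹ * p u + t * n u := by
    intro b h
    have := mul_nonneg (inv_nonneg.2 ht.le) h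
    field_simp at this ⊢
    linarith
  rw [abs_le']
  refine ⟨?_, key _ (hpencil t u)⟩
  simpa using key (-w u) (by simpa using hpencil (-t) u)

lemma abs_polar_le_of_le_sq_mul (hp : ∀ u, 0 ≤ p u) {θ : ℝ} (hθ : 0 < θ) {φ : E}
    (hφ : p φ ≤ θ ^ 2 * n φ) (v : E) : |polar p φ v| ≤ θ * (n φ + p v) := by
  have hmul := mul_le_mul_of_nonneg_left hφ (inv_pos.2 hθ).le
  calc |polar p φ v| ≤ θ⁻¹ * p φ + θ⁻¹⁻¹ * p v := abs_polar_le hp φ v (inv_pos.2 hθ)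
    _ ≤ θ⁻¹ * (θ ^ 2 * n φ) + θ⁻¹⁻¹ * p v := by gcongr
    _ = θ * (n φ + p v) := by field_simp

lemma abs_le_two_mul_of_le_sq_mul (hpencil : ∀ σ u, 0 ≤ p u + σ * w u + σ ^ 2 * n u) {θ : ℝ}
    (hθ : 0 < θ) {φ : E} (hφ : p φ ≤ θ ^ 2 * n φ) : |w φ| ≤ 2 * θ * n φ :=
  calc |w φ| ≤ θ⁻¹ * p φ + θ * n φ := abs_le_of_pencil_nonneg hpencil φ hθ
    _ ≤ θ⁻¹ * (θ ^ 2 * n φ) + θ * n φ := by gcongr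
    _ = 2 * θ * n φ := by field_simp; ring

lemma abs_le_mul_of_gap (hpencil : ∀ σ u, 0 ≤ p u + σ * w u + σ ^ 2 * n u) {c : ℝ} (hc : 0 < c)
    {v : E} (hv : c * n v ≤ p v) : |w v| ≤ (1 + c⁻¹) * p v := by
  have hnv : n v ≤ c⁻¹ * p v := by rwa [← div_eq_inv_mul, le_div_iff₀' hc]
  have := abs_le_of_pencil_nonneg hpencil v one_pos
  rw [inv_one, one_mul, one_mul] at this
  linarith

lemma mul_le_add_mul_polar_of_test {a s ε : ℝ} (hε : 0 < ε) {φ v : E}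
    (htest : a * (ε * s) ^ 2 * n (φ + ε • v) ≤ p (φ + ε • v) + (ε * s) * w (φ + ε • v)) :
    a * s ^ 2 * n (φ + ε • v) ≤ p v + s * polar w φ v +
      (ε⁻¹ ^ 2 * p φ + ε⁻¹ * polar p φ v + s * (ε⁻¹ * w φ) + ε * (s * w v)) := by
  rw [quadraticForm_add_smul p, quadraticForm_add_smul w] at htest
  have := mul_le_mul_of_nonneg_left htest (sq_nonneg ε⁻¹)
  field_simp at this ⊢
  linarith

lemma second_order_remainder_le (hp : ∀ u, 0 ≤ p u) (hn : ∀ u, 0 ≤ n u)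
    (hpencil : ∀ σ u, 0 ≤ p u + σ * w u + σ ^ 2 * n u) {c ε : ℝ} (hc : 0 < c) (hε : 0 < ε)
    (hε1 : ε ≤ 1) {φ v : E} (hφ : p φ ≤ (ε ^ 2) ^ 2 * n φ) (hv : c * n v ≤ p v) (s : ℝ) :
    ε⁻¹ ^ 2 * p φ + ε⁻¹ * polar p φ v + s * (ε⁻¹ * w φ) + ε * (s * w v) ≤
      ε * ((2 + |s| * (3 + c⁻¹)) * (n φ + p v)) := by
  have hnφ := hn φ
  have hpv := hp v
  have hε2 : 0 < ε ^ 2 := by positivity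
  have hpφ : ε⁻¹ ^ 2 * p φ ≤ ε * n φ := by
    have := mul_le_mul_of_nonneg_left hφ (sq_nonneg ε⁻¹)
    calc ε⁻¹ ^ 2 * p φ ≤ ε⁻¹ ^ 2 * ((ε ^ 2) ^ 2 * n φ) := this
      _ = ε * (ε * n φ) := by field_simp
      _ ≤ ε * n φ := by gcongr; exact mul_le_of_le_one_left hnφ hε1
  have hpolar : ε⁻¹ * polar p φ v ≤ ε * (n φ + p v) :=
    calc ε⁻¹ * polar p φ v ≤ ε⁻¹ * (ε ^ 2 * (n φ + p v)) := by
          gcongr; exact (le_abs_self _).trans (abs_polar_le_of_le_sq_mul hp hε2 hφ v)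
      _ = ε * (n φ + p v) := by field_simp
  have hwφ : s * (ε⁻¹ * w φ) ≤ ε * (2 * |s| * n φ) :=
    calc s * (ε⁻¹ * w φ) ≤ |s| * (ε⁻¹ * |w φ|) := by
          refine (le_abs_self _).trans_eq ?_
          rw [abs_mul, abs_mul, abs_of_pos (inv_pos.2 hε)]
      _ ≤ |s| * (ε⁻¹ * (2 * ε ^ 2 * n φ)) := by
          gcongr; exact abs_le_two_mul_of_le_sq_mul hpencil hε2 hφ
      _ = ε * (2 * |s| * n φ) := by field_simp
  have hwv : s * w v ≤ |s| * ((1 + c⁻¹) * p v) := by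
    refine (le_abs_self _).trans ?_
    rw [abs_mul]
    gcongr
    exact abs_le_mul_of_gap hpencil hc hv
  have hcross : 0 ≤ |s| * ((1 + c⁻¹) * n φ + 2 * p v) := by positivity
  have := mul_le_mul_of_nonneg_left hcross hε.le
  have := mul_le_mul_of_nonneg_left hwv hε.le
  have := mul_nonneg hε.le hpv
  linarith

/-- Testing the lower bound at the parameter `ε * s` on `φ + ε • v` and letting `ε` tend to `0`
isolates the second-order coefficient `p v + s * polar w φ v`. -/
lemma exists_forall_second_order_le (hp : ∀ u, 0 ≤ p u) (hn : ∀ u, 0 ≤ n u)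
    (hpencil : ∀ σ u, 0 ≤ p u + σ * w u + σ ^ 2 * n u) {c d : ℝ} (hc : 0 < c)
    (hbound : ∀ κ > 0, ∀ᶠ σ in 𝓝 (0 : ℝ), ∀ u, (d - κ) * σ ^ 2 * n u ≤ p u + σ * w u)
    (s : ℝ) {κ : ℝ} (hκ : 0 < κ) :
    ∃ θ > 0, ∀ φ v, p φ ≤ θ ^ 2 * n φ → c * n v ≤ p v →
      (d * s ^ 2 - κ * (s ^ 2 + 1)) * n φ ≤ (1 + κ) * p v + s * polar w φ v := by
  set M := 2 + |s| * (3 + c⁻¹) + |d - κ| * s ^ 2 * (1 + 2 * c⁻¹) with hM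
  have hsmall : ∀ᶠ ε in 𝓝[>] (0 : ℝ), ε ≤ 1 ∧ M * ε ≤ κ ∧
      ∀ u, (d - κ) * (ε * s) ^ 2 * n u ≤ p u + (ε * s) * w u := by
    have hlin : ∀ a : ℝ, Tendsto (fun ε : ℝ => a * ε) (𝓝 0) (𝓝 0) := fun a => by
      simpa using (continuous_const_mul a).tendsto 0
    have htend : Tendsto (fun ε : ℝ => ε * s) (𝓝 0) (𝓝 0) := by simpa [mul_comm] using hlin s
    filter_upwards [nhdsWithin_le_nhds (eventually_le_nhds one_pos),
      nhdsWithin_le_nhds ((hlin M).eventually_le_const hκ),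
      nhdsWithin_le_nhds (htend.eventually (hbound κ hκ))] with ε h1 h2 h3 using ⟨h1, h2, h3⟩
  obtain ⟨ε, ⟨hε1, hMε, hε⟩, hε0 : 0 < ε⟩ := (hsmall.and self_mem_nhdsWithin).exists
  refine ⟨ε ^ 2, by positivity, fun φ v hφ hv => ?_⟩
  have hnφ := hn φ
  have hpv := hp v
  have hnv : n v ≤ c⁻¹ * p v := by rwa [← div_eq_inv_mul, le_div_iff₀' hc]
  have htest := mul_le_add_mul_polar_of_test hε0 (hε (φ + ε • v))
  have hrem := second_order_remainder_le hp hn hpencil hc hε0 hε1 hφ hv s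
  have hmass : |n (φ + ε • v) - n φ| ≤ ε * (n φ + 2 * c⁻¹ * p v) := by
    have hsub := abs_map_add_smul_sub_le hn φ v hε0 one_pos
    rw [inv_one, mul_one] at hsub
    have hε2 : ε ^ 2 * n v ≤ ε * n v :=
      mul_le_mul_of_nonneg_right (by nlinarith) (hn v)
    have := mul_le_mul_of_nonneg_left hnv hε0.le
    linarith
  have hmass' : -((d - κ) * s ^ 2 * (n (φ + ε • v) - n φ)) ≤
      |d - κ| * s ^ 2 * (ε * (n φ + 2 * c⁻¹ * p v)) := by
    refine (neg_le_abs _).trans ?_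
    rw [abs_mul, abs_mul, abs_of_nonneg (sq_nonneg s)]
    gcongr
  have hcross : 0 ≤ ε * (|d - κ| * s ^ 2 * (2 * c⁻¹ * n φ + p v)) := by positivity
  have hMκ := mul_le_mul_of_nonneg_right hMε (add_nonneg hnφ hpv)
  rw [hM] at hMκ
  linarith

/-- Rescaling `s` to `(1 + (2 * A + 2) * |s|) * s` restores the unit coefficient of `Y`. -/
lemma sub_mul_le_of_rescaled {A d s X Y W : ℝ} (hA : 1 ≤ A) (hs : 2 * A * |s| ≤ 1) (hX : 0 ≤ X)
    (hY : 0 ≤ Y)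
    (h : (d * ((1 + (2 * A + 2) * |s|) * s) ^ 2
        - |s| ^ 3 * (((1 + (2 * A + 2) * |s|) * s) ^ 2 + 1)) * X
      ≤ (1 + |s| ^ 3) * Y + (1 + (2 * A + 2) * |s|) * s * W) :
    (d * s ^ 2 - (|d| * (2 * A + 2) + 4) * |s| ^ 3) * X ≤ (1 - A * |s|) * Y + s * W := by
  set σ := |s|
  have hσ : 0 ≤ σ := abs_nonneg s
  have hσ1 : σ ≤ 1 := by nlinarith
  have hsσ : s ^ 2 = σ ^ 2 := (sq_abs s).symm
  set r := 1 + (2 * A + 2) * σ with hr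
  have hr1 : 1 ≤ r := by nlinarith
  have hr3 : r ≤ 3 := by nlinarith
  have hYr : (1 + σ ^ 3) * Y ≤ r * ((1 - A * σ) * Y) := by
    have hσ3 : σ ^ 3 ≤ σ := by
      simpa using pow_le_pow_of_le_one hσ hσ1 (by norm_num : 1 ≤ 3)
    have : 1 + σ ^ 3 ≤ r * (1 - A * σ) := by nlinarith
    nlinarith
  have hd : -(|d| * (2 * A + 2) * σ ^ 3) ≤ d * σ ^ 2 * r - d * σ ^ 2 := by
    have := mul_le_mul_of_nonneg_right (neg_abs_le d) (by positivity : 0 ≤ (2 * A + 2) * σ ^ 3)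
    rw [hr]; linarith
  have hcube : r * (σ ^ 3 * (r * σ ^ 2)) + σ ^ 3 ≤ r * (4 * σ ^ 3) := by
    have h1 : r * σ ^ 2 ≤ 3 * 1 := by gcongr; exact pow_le_one₀ hσ hσ1
    have h2 : σ ^ 3 ≤ r * σ ^ 3 := le_mul_of_one_le_left (by positivity) hr1
    have h3 : r * (σ ^ 3 * (r * σ ^ 2)) ≤ r * (σ ^ 3 * (3 * 1)) := by gcongr
    linarith
  have hcoef : r * (d * s ^ 2 - (|d| * (2 * A + 2) + 4) * σ ^ 3) ≤
      d * (r * s) ^ 2 - σ ^ 3 * ((r * s) ^ 2 + 1) := by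
    have := mul_le_mul_of_nonneg_left hd (by positivity : 0 ≤ r)
    rw [mul_pow, hsσ]
    linarith
  refine le_of_mul_le_mul_left ?_ (by positivity : 0 < r)
  linarith [mul_le_mul_of_nonneg_right hcoef hX]

lemma mul_map_add_le (hn : ∀ u, 0 ≤ n u) {C d s : ℝ} (hC : 0 ≤ C) (hs : s ≠ 0) (hs1 : |s| ≤ 1)
    (hsC : C * |s| ≤ 1) (φ v : E) :
    (d * s ^ 2 - C * |s| ^ 3) * n (φ + v) ≤
      (d * s ^ 2 + (|d| - C / 2) * |s| ^ 3) * n φ + (2 * |d| + 3) * |s| * n v := by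
  have hσ : 0 < |s| := abs_pos.2 hs
  have hnv := hn v
  have hclose : ∀ t > 0, |n (φ + v) - n φ| ≤ t * n φ + (t⁻¹ + 1) * n v := fun t ht => by
    simpa using abs_map_add_smul_sub_le hn φ v one_pos ht
  have hd : d * s ^ 2 * (n (φ + v) - n φ) ≤ |d| * (|s| ^ 3 * n φ + (|s| + |s|) * n v) :=
    calc d * s ^ 2 * (n (φ + v) - n φ) ≤ |d| * |s| ^ 2 * |n (φ + v) - n φ| := by
          refine (le_abs_self _).trans_eq ?_
          rw [abs_mul, abs_mul, abs_pow]
      _ ≤ |d| * |s| ^ 2 * (|s| * n φ + (|s|⁻¹ + 1) * n v) := by gcongr; exact hclose _ hσ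
      _ = |d| * (|s| ^ 3 * n φ + (|s| + |s| ^ 2) * n v) := by field_simp
      _ ≤ |d| * (|s| ^ 3 * n φ + (|s| + |s|) * n v) := by
          gcongr; exact pow_le_of_le_one hσ.le hs1 two_ne_zero
  have hhalf : n φ / 2 - 3 * n v ≤ n (φ + v) := by
    have := (abs_le.1 (hclose (1 / 2) (by norm_num))).1
    norm_num at this
    linarith
  have hCv : C * |s| ^ 3 * n v ≤ |s| * n v := by
    gcongr
    calc C * |s| ^ 3 = C * |s| * |s| * |s| := by ring
      _ ≤ 1 * |s| := by gcongr; exact mul_le_one₀ hsC hσ.le hs1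
      _ = |s| := one_mul _
  linarith [mul_le_mul_of_nonneg_left hhalf (by positivity : 0 ≤ C * |s| ^ 3)]

lemma le_map_add_of_nearMinimizer (hp : ∀ u, 0 ≤ p u) (hn : ∀ u, 0 ≤ n u)
    (hpencil : ∀ σ u, 0 ≤ p u + σ * w u + σ ^ 2 * n u) {c θ s : ℝ} (hc : 0 < c) (hθ : 0 < θ)
    (hθs : θ ≤ |s| ^ 3) (hs : |s| ≤ 1) {φ v : E} (hφ : p φ ≤ θ ^ 2 * n φ) (hv : c * n v ≤ p v) :
    (1 - (2 + c⁻¹) * |s|) * p v + s * polar w φ v - 3 * |s| ^ 3 * n φ ≤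
      p (φ + v) + s * w (φ + v) := by
  have hnφ := hn φ
  have hpv := hp v
  have hpolar : |polar p φ v| ≤ |s| ^ 3 * n φ + |s| * p v :=
    calc |polar p φ v| ≤ θ * (n φ + p v) := abs_polar_le_of_le_sq_mul hp hθ hφ v
      _ ≤ |s| ^ 3 * (n φ + p v) := by gcongr
      _ = |s| ^ 3 * n φ + |s| ^ 3 * p v := mul_add _ _ _
      _ ≤ |s| ^ 3 * n φ + |s| * p v := by
        gcongr; simpa using pow_le_pow_of_le_one (abs_nonneg s) hs (by norm_num : 1 ≤ 3)
  have hwφ : |s * w φ| ≤ 2 * |s| ^ 3 * n φ :=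
    calc |s * w φ| ≤ 1 * (2 * θ * n φ) := by
          rw [abs_mul]; gcongr; exact abs_le_two_mul_of_le_sq_mul hpencil hθ hφ
      _ ≤ 2 * |s| ^ 3 * n φ := by rw [one_mul]; gcongr
  have hwv : |s * w v| ≤ |s| * ((1 + c⁻¹) * p v) := by
    rw [abs_mul]; gcongr; exact abs_le_mul_of_gap hpencil hc hv
  rw [QuadraticMap.map_add p, QuadraticMap.map_add w]
  linarith [hp φ, (abs_le.1 hpolar).1, (abs_le.1 hwφ).1, (abs_le.1 hwv).1]

/-- Perturbation theory at the bottom `0` of `p` relative to `n`: the spectral gap `c` in `hsplit`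
is what makes the error cubic. -/
theorem exists_cubic_lower_bound (hp : ∀ u, 0 ≤ p u) (hn : ∀ u, 0 ≤ n u)
    (hpencil : ∀ σ u, 0 ≤ p u + σ * w u + σ ^ 2 * n u) {c d : ℝ} (hc : 0 < c)
    (hsplit : ∀ θ > 0, ∀ u, ∃ φ v, φ + v = u ∧ p φ ≤ θ ^ 2 * n φ ∧ c * n v ≤ p v)
    (hbound : ∀ κ > 0, ∀ᶠ σ in 𝓝 (0 : ℝ), ∀ u, (d - κ) * σ ^ 2 * n u ≤ p u + σ * w u) :
    ∃ C > 0, ∃ s₀ > 0, ∀ s, |s| < s₀ → ∀ u, (d * s ^ 2 - C * |s| ^ 3) * n u ≤ p u + s * w u := by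
  set A := 2 + c⁻¹ + (2 * |d| + 3) * c⁻¹ with hA
  set C := 2 * (7 + |d| * (2 * A + 3)) with hC
  have hc' : 0 < c⁻¹ := inv_pos.2 hc
  have hA2 : 2 ≤ A := by linarith [show 0 ≤ (2 * |d| + 3) * c⁻¹ by positivity]
  have hC0 : 1 ≤ C := by linarith [show 0 ≤ |d| * (2 * A + 3) by positivity]
  refine ⟨C, by positivity, min (2 * A)⁻¹ C⁻¹, by positivity, fun s hs u => ?_⟩
  obtain rfl | hs0 := eq_or_ne s 0
  · simpa using hp u
  have hσ : 0 < |s| := abs_pos.2 hs0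
  obtain ⟨hsA, hsC⟩ := le_min_iff.1 hs.le
  rw [← one_div, le_div_iff₀' (by positivity)] at hsA hsC
  have hs1 : |s| ≤ 1 := by nlinarith
  obtain ⟨θ, hθ, hsecond⟩ := exists_forall_second_order_le hp hn hpencil hc hbound
    ((1 + (2 * A + 2) * |s|) * s) (pow_pos hσ 3)
  obtain ⟨φ, v, rfl, hφ, hv⟩ := hsplit (min θ (|s| ^ 3)) (by positivity) u
  have hφθ : p φ ≤ θ ^ 2 * n φ := hφ.trans (by gcongr; exacts [hn φ, min_le_left _ _])
  have hmain := sub_mul_le_of_rescaled (by linarith) hsA (hn φ) (hp v) (hsecond φ v hφθ hv)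
  have hlower := le_map_add_of_nearMinimizer hp hn hpencil hc (by positivity) (min_le_right _ _)
    hs1 hφ hv
  have hupper := mul_map_add_le hn (by positivity) hs0 hs1 hsC φ v (d := d)
  have hnv : (2 * |d| + 3) * |s| * n v ≤ (2 * |d| + 3) * |s| * (c⁻¹ * p v) := by
    gcongr; rwa [← div_eq_inv_mul, le_div_iff₀' hc]
  have hCφ : C * |s| ^ 3 * n φ = 2 * (7 + |d| * (2 * A + 3)) * |s| ^ 3 * n φ := by rw [hC]
  have hAv : A * |s| * p v = (2 + c⁻¹ + (2 * |d| + 3) * c⁻¹) * |s| * p v := by rw [hA]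
  linarith [hCφ, hAv]

end QuadraticPerturbation

section CompactSupport

variable {F : Type*} [NormedAddCommGroup F]

lemma integrable_mul_norm_sq_of_hasCompactSupport {f : ℝ → F}
    (hf : Continuous f) (hc : HasCompactSupport f) {V : ℝ → ℝ} (hV : Continuous V) :
    Integrable fun t => V t * ‖f t‖ ^ 2 :=
  Continuous.integrable_of_hasCompactSupport (by fun_prop)
    (hc.comp_left (g := fun z : F => ‖z‖ ^ 2) (by simp)).mul_left

lemma integrable_norm_sq_of_hasCompactSupport {f : ℝ → F}
    (hf : Continuous f) (hc : HasCompactSupport f) : Integrable fun t => ‖f t‖ ^ 2 := by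
  simpa using integrable_mul_norm_sq_of_hasCompactSupport hf hc (continuous_const (y := (1 : ℝ)))

lemma integrable_energy_of_hasCompactSupport [NormedSpace ℝ F] {u : ℝ → F}
    (hu : ContDiff ℝ 1 u) (hc : HasCompactSupport u) {V : ℝ → ℝ} (hV : Continuous V) :
    Integrable fun t => ‖deriv u t‖ ^ 2 + V t * ‖u t‖ ^ 2 :=
  (integrable_norm_sq_of_hasCompactSupport (hu.continuous_deriv le_rfl) hc.deriv).add
    (integrable_mul_norm_sq_of_hasCompactSupport hu.continuous hc hV)

end CompactSupport

section Bump

/-- A cutoff equal to `1` on `[-1, 1]` and supported in `[-2, 2]`: the common source of trial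
functions and partitions of unity. -/
def unitBump : ContDiffBump (0 : ℝ) := ⟨1, 2, one_pos, one_lt_two⟩

lemma unitBump_eq_one {t : ℝ} (ht : |t| ≤ 1) : unitBump t = 1 :=
  unitBump.one_of_mem_closedBall (by simpa [unitBump] using ht)

lemma unitBump_eq_zero {t : ℝ} (ht : 2 ≤ |t|) : unitBump t = 0 :=
  unitBump.zero_of_le_dist (by simpa [unitBump] using ht)

lemma contDiff_ofReal_unitBump : ContDiff ℝ 1 fun t => (unitBump t : ℂ) :=
  Complex.ofRealCLM.contDiff.comp unitBump.contDiff

lemma hasCompactSupport_ofReal_unitBump : HasCompactSupport fun t => (unitBump t : ℂ) :=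
  unitBump.hasCompactSupport.comp_left Complex.ofReal_zero

lemma integrable_unitBump_norm_sq : Integrable fun t => ‖(unitBump t : ℂ)‖ ^ 2 :=
  integrable_norm_sq_of_hasCompactSupport contDiff_ofReal_unitBump.continuous
    hasCompactSupport_ofReal_unitBump

lemma integrable_unitBump_energy {V : ℝ → ℝ} (hV : Continuous V) :
    Integrable fun t =>
      ‖deriv (fun t => (unitBump t : ℂ)) t‖ ^ 2 + V t * ‖(unitBump t : ℂ)‖ ^ 2 :=
  integrable_energy_of_hasCompactSupport contDiff_ofReal_unitBump
    hasCompactSupport_ofReal_unitBump hV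

lemma integral_Ioi_unitBump_pos : 0 < ∫ t in Ioi (0 : ℝ), ‖(unitBump t : ℂ)‖ ^ 2 :=
  calc (0 : ℝ) < ∫ _ in Ioc (0 : ℝ) 1, (1 : ℝ) := by simp
    _ = ∫ t in Ioc (0 : ℝ) 1, ‖(unitBump t : ℂ)‖ ^ 2 :=
      setIntegral_congr_fun measurableSet_Ioc fun t ht => by
        simp [unitBump_eq_one (abs_le.2 ⟨by linarith [ht.1], ht.2⟩)]
    _ ≤ ∫ t in Ioi (0 : ℝ), ‖(unitBump t : ℂ)‖ ^ 2 :=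
      setIntegral_mono_set integrable_unitBump_norm_sq.integrableOn
        (Eventually.of_forall fun _ => by positivity)
        (Eventually.of_forall Ioc_subset_Ioi_self)

lemma integral_unitBump_pos : 0 < ∫ t, ‖(unitBump t : ℂ)‖ ^ 2 :=
  integral_Ioi_unitBump_pos.trans_le
    (setIntegral_le_integral integrable_unitBump_norm_sq (ae_of_all _ fun t => by positivity))

end Bump

section IntervalPoincare

variable {F : Type*} [NormedAddCommGroup F] [NormedSpace ℝ F] {a b : ℝ}

lemma sq_intervalIntegral_le {f : ℝ → ℝ} (hab : a ≤ b) (hf : IntervalIntegrable f volume a b)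
    (hf2 : IntervalIntegrable (fun t => f t ^ 2) volume a b) :
    (∫ t in a..b, f t) ^ 2 ≤ (b - a) * ∫ t in a..b, f t ^ 2 := by
  rcases hab.eq_or_lt with rfl | hlt
  · simp
  set S := ∫ t in a..b, f t
  have hnonneg : 0 ≤ ∫ t in a..b, ((b - a) * f t - S) ^ 2 :=
    intervalIntegral.integral_nonneg hab fun t _ => sq_nonneg _
  have hexpand : ∫ t in a..b, ((b - a) * f t - S) ^ 2 =
      (b - a) * ((b - a) * (∫ t in a..b, f t ^ 2) - S ^ 2) := by
    calc ∫ t in a..b, ((b - a) * f t - S) ^ 2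
        = ∫ t in a..b, ((b - a) ^ 2 * f t ^ 2 - 2 * (b - a) * S * f t + S ^ 2) := by
          congr 1; ext t; ring
      _ = (b - a) ^ 2 * (∫ t in a..b, f t ^ 2) - 2 * (b - a) * S * S + (b - a) * S ^ 2 := by
          rw [intervalIntegral.integral_add ((hf2.const_mul _).sub (hf.const_mul _))
              intervalIntegrable_const, intervalIntegral.integral_sub (hf2.const_mul _)
              (hf.const_mul _), intervalIntegral.integral_const_mul,
            intervalIntegral.integral_const_mul, intervalIntegral.integral_const, smul_eq_mul]
      _ = _ := by ring
  rw [hexpand] at hnonneg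
  exact sub_nonneg.1 (nonneg_of_mul_nonneg_right hnonneg (sub_pos.2 hlt))

lemma norm_sq_le_mul_intervalIntegral_norm_deriv_sq {v : ℝ → F} (hv : ContDiff ℝ 1 v)
    (hvb : v b = 0) {t : ℝ} (ht : t ∈ Icc a b) :
    ‖v t‖ ^ 2 ≤ (b - a) * ∫ x in a..b, ‖deriv v x‖ ^ 2 := by
  have hc : Continuous (deriv v) := hv.continuous_deriv le_rfl
  have hint : ∀ x y, IntervalIntegrable (fun s => ‖deriv v s‖ ^ 2) volume x y :=
    (hc.norm.pow 2).intervalIntegrable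
  have hnorm : ‖v t‖ ≤ ∫ x in t..b, ‖deriv v x‖ := by
    have h := norm_sub_le_integral_of_norm_deriv_le_of_le ht.2 hv.continuous.continuousOn
      (hv.differentiable one_ne_zero).differentiableOn (ae_of_all _ fun _ _ => le_rfl)
      (hc.norm.intervalIntegrable _ _)
    rwa [hvb, zero_sub, norm_neg] at h
  calc ‖v t‖ ^ 2 ≤ (∫ x in t..b, ‖deriv v x‖) ^ 2 := by gcongr
    _ ≤ (b - t) * ∫ x in t..b, ‖deriv v x‖ ^ 2 :=
        sq_intervalIntegral_le ht.2 (hc.norm.intervalIntegrable _ _) (hint _ _)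
    _ ≤ (b - a) * ∫ x in a..b, ‖deriv v x‖ ^ 2 := by
        gcongr
        · exact intervalIntegral.integral_nonneg ht.2 fun x _ => by positivity
        · exact sub_nonneg.2 (ht.1.trans ht.2)
        · exact ht.1
        · exact intervalIntegral.integral_mono_interval ht.1 ht.2 le_rfl
            (ae_of_all _ fun x => by positivity) (hint _ _)

lemma intervalIntegral_norm_sq_le {v : ℝ → F} (hv : ContDiff ℝ 1 v) (hvb : v b = 0)
    (hab : a ≤ b) :
    ∫ t in a..b, ‖v t‖ ^ 2 ≤ (b - a) ^ 2 * ∫ t in a..b, ‖deriv v t‖ ^ 2 := by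
  calc ∫ t in a..b, ‖v t‖ ^ 2
      ≤ ∫ _ in a..b, (b - a) * ∫ x in a..b, ‖deriv v x‖ ^ 2 :=
        intervalIntegral.integral_mono_on hab
          ((hv.continuous.norm.pow 2).intervalIntegrable _ _) intervalIntegrable_const
          fun t ht => norm_sq_le_mul_intervalIntegral_norm_deriv_sq hv hvb ht
    _ = _ := by rw [intervalIntegral.integral_const, smul_eq_mul]; ring

end IntervalPoincare

section TranslatedHalfLine

variable {F : Type*} [NormedAddCommGroup F]

lemma integrableOn_Ioi_comp_add_right_iff {f : ℝ → F} (a b : ℝ) :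
    IntegrableOn (fun t => f (t + a)) (Ioi b) ↔ IntegrableOn f (Ioi (b + a)) := by
  simpa [Function.comp_def] using (measurePreserving_add_right volume a).integrableOn_comp_preimage
    (measurableEmbedding_addRight a) (f := f) (s := Ioi (b + a))

lemma setIntegral_Ioi_comp_add_right [NormedSpace ℝ F] (f : ℝ → F) (a b : ℝ) :
    ∫ t in Ioi b, f (t + a) = ∫ t in Ioi (b + a), f t := by
  simpa using (measurePreserving_add_right volume a).setIntegral_preimage_emb
    (measurableEmbedding_addRight a) f (Ioi (b + a))

end TranslatedHalfLine

section SquareNormForm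

lemma norm_real_smul_sq {F : Type*} [NormedAddCommGroup F] [NormedSpace ℝ F] (a : ℝ) (z : F) :
    ‖a • z‖ ^ 2 = a ^ 2 * ‖z‖ ^ 2 := by
  rw [norm_smul, mul_pow, Real.norm_eq_abs, sq_abs]

variable {α E : Type*} [MeasurableSpace α] {μ : Measure α} [AddCommGroup E] [Module ℝ E]

/-- The quadratic form `u ↦ ∫ ‖A u‖²` of a linear map `A` with values in the square-integrable
functions. -/
def sqNormForm (μ : Measure α) (A : E →ₗ[ℝ] (α → ℂ)) (hA : ∀ u, MemLp (A u) 2 μ) :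
    QuadraticForm ℝ E :=
  (LinearMap.BilinMap.toQuadraticMap (innerₗ (Lp ℂ 2 μ))).comp
    { toFun := fun u => (hA u).toLp
      map_add' := fun u v => by simp only [map_add]; rfl
      map_smul' := fun c u => by simp only [map_smul]; rfl }

lemma sqNormForm_apply (A : E →ₗ[ℝ] (α → ℂ)) (hA : ∀ u, MemLp (A u) 2 μ) (u : E) :
    sqNormForm μ A hA u = ∫ x, ‖A u x‖ ^ 2 ∂μ := by
  change inner ℝ ((hA u).toLp) ((hA u).toLp) = _
  rw [L2.inner_def]
  refine integral_congr_ae ?_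
  filter_upwards [(hA u).coeFn_toLp] with x hx
  rw [hx, real_inner_self_eq_norm_sq]

end SquareNormForm

section DeGennes

/-- The form domain of the de Gennes operators, restricted as in `deGennes` to functions of class
`C¹`; it does not depend on the parameter `ξ`. -/
def deGennesDomain : Submodule ℂ (ℝ → ℂ) where
  carrier := {u | ContDiff ℝ 1 u ∧ MemLp u 2 (volume.restrict (Ioi 0)) ∧
    MemLp (deriv u) 2 (volume.restrict (Ioi 0)) ∧
    MemLp (fun t => t • u t) 2 (volume.restrict (Ioi 0))}
  add_mem' := by
    rintro u v ⟨hu, hu0, hu1, hut⟩ ⟨hv, hv0, hv1, hvt⟩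
    refine ⟨hu.add hv, hu0.add hv0, ?_, ?_⟩
    · convert hu1.add hv1 using 1
      ext t
      exact deriv_add (hu.differentiable one_ne_zero t) (hv.differentiable one_ne_zero t)
    · convert hut.add hvt using 1
      ext t
      exact smul_add t (u t) (v t)
  zero_mem' := by
    refine ⟨contDiff_const, MemLp.zero, ?_, ?_⟩ <;> simp
  smul_mem' := by
    rintro c u ⟨hu, hu0, hu1, hut⟩
    refine ⟨hu.const_smul c, hu0.const_smul c, ?_, ?_⟩
    · convert hu1.const_smul c using 1
      ext t
      exact deriv_const_smul c (hu.differentiable one_ne_zero t)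
    · convert hut.const_smul c using 1
      ext t
      exact smul_comm t c (u t)

namespace deGennesDomain

lemma contDiff (u : deGennesDomain) : ContDiff ℝ 1 (u : ℝ → ℂ) := u.2.1

lemma differentiable (u : deGennesDomain) : Differentiable ℝ (u : ℝ → ℂ) :=
  u.2.1.differentiable one_ne_zero

lemma memLp (u : deGennesDomain) : MemLp (u : ℝ → ℂ) 2 (volume.restrict (Ioi 0)) := u.2.2.1

lemma memLp_deriv (u : deGennesDomain) : MemLp (deriv (u : ℝ → ℂ)) 2 (volume.restrict (Ioi 0)) :=
  u.2.2.2.1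

lemma memLp_add_smul (u : deGennesDomain) (ξ : ℝ) :
    MemLp (fun t => (t + ξ) • (u : ℝ → ℂ) t) 2 (volume.restrict (Ioi 0)) := by
  convert u.2.2.2.2.add (u.2.2.1.const_smul ξ) using 1
  ext t
  exact add_smul t ξ _

lemma integrableOn_mass (u : deGennesDomain) :
    IntegrableOn (fun t => ‖(u : ℝ → ℂ) t‖ ^ 2) (Ioi 0) :=
  (memLp u).integrable_norm_pow two_ne_zero

lemma integrableOn_deriv (u : deGennesDomain) :
    IntegrableOn (fun t => ‖deriv (u : ℝ → ℂ) t‖ ^ 2) (Ioi 0) :=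
  (memLp_deriv u).integrable_norm_pow two_ne_zero

lemma integrableOn_potential (u : deGennesDomain) (ξ : ℝ) :
    IntegrableOn (fun t => (t + ξ) ^ 2 * ‖(u : ℝ → ℂ) t‖ ^ 2) (Ioi 0) := by
  simpa only [norm_real_smul_sq, IntegrableOn] using
    (memLp_add_smul u ξ).integrable_norm_pow two_ne_zero

lemma integrableOn_energy (u : deGennesDomain) (ξ : ℝ) :
    IntegrableOn (fun t => ‖deriv (u : ℝ → ℂ) t‖ ^ 2 + (t + ξ) ^ 2 * ‖(u : ℝ → ℂ) t‖ ^ 2) (Ioi 0) :=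
  (integrableOn_deriv u).add (integrableOn_potential u ξ)

lemma mem_of_integrableOn {u : ℝ → ℂ} (hu : ContDiff ℝ 1 u)
    (hmass : IntegrableOn (fun t => ‖u t‖ ^ 2) (Ioi 0)) {ξ : ℝ}
    (henergy : IntegrableOn (fun t => ‖deriv u t‖ ^ 2 + (t + ξ) ^ 2 * ‖u t‖ ^ 2) (Ioi 0)) :
    u ∈ deGennesDomain := by
  have hc : Continuous u := hu.continuous
  have hc' : Continuous (deriv u) := hu.continuous_deriv le_rfl
  have hu0 : MemLp u 2 (volume.restrict (Ioi 0)) :=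
    (memLp_two_iff_integrable_sq_norm hc.aestronglyMeasurable).2 hmass
  have hsq : ∀ {f : ℝ → ℂ}, Continuous f →
      (∀ t, ‖f t‖ ^ 2 ≤ ‖deriv u t‖ ^ 2 + (t + ξ) ^ 2 * ‖u t‖ ^ 2) →
      MemLp f 2 (volume.restrict (Ioi 0)) := fun {f} hf hle => by
    refine (memLp_two_iff_integrable_sq_norm hf.aestronglyMeasurable).2
      (henergy.mono' (by fun_prop) (ae_of_all _ fun t => ?_))
    simpa using hle t
  refine ⟨hu, hu0, hsq hc' fun t => le_add_of_nonneg_right (by positivity), ?_⟩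
  have hshift : MemLp (fun t => (t + ξ) • u t) 2 (volume.restrict (Ioi 0)) :=
    hsq (by fun_prop) fun t => by
      rw [norm_real_smul_sq]
      exact le_add_of_nonneg_left (sq_nonneg _)
  convert hshift.sub (hu0.const_smul ξ) using 1
  ext t
  simp [add_mul]

/-- The form `u ↦ ∫₀^∞ |u|²`. -/
def mass : QuadraticForm ℝ deGennesDomain :=
  sqNormForm (volume.restrict (Ioi 0)) (deGennesDomain.subtype.restrictScalars ℝ)
    memLp

/-- The form `u ↦ ∫₀^∞ (|u′|² + (t + ξ)² |u|²)`. -/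
def energy (ξ : ℝ) : QuadraticForm ℝ deGennesDomain :=
  sqNormForm (volume.restrict (Ioi 0))
      { toFun := fun u : deGennesDomain => deriv (u : ℝ → ℂ)
        map_add' := fun u v => funext fun t => deriv_add (differentiable u t) (differentiable v t)
        map_smul' := fun c u => funext fun t => deriv_const_smul c (differentiable u t) }
      memLp_deriv +
    sqNormForm (volume.restrict (Ioi 0))
      { toFun := fun (u : deGennesDomain) t => (t + ξ) • (u : ℝ → ℂ) t
        map_add' := fun _ _ => funext fun _ => smul_add _ _ _
        map_smul' := fun c _ => funext fun _ => smul_comm _ c _ }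
      fun u => memLp_add_smul u ξ

lemma mass_apply (u : deGennesDomain) :
    mass u = ∫ t in Ioi (0 : ℝ), ‖(u : ℝ → ℂ) t‖ ^ 2 :=
  sqNormForm_apply _ _ u

lemma energy_apply (ξ : ℝ) (u : deGennesDomain) :
    energy ξ u =
      ∫ t in Ioi (0 : ℝ), (‖deriv (u : ℝ → ℂ) t‖ ^ 2 + (t + ξ) ^ 2 * ‖(u : ℝ → ℂ) t‖ ^ 2) := by
  rw [energy, _root_.add_apply, sqNormForm_apply, sqNormForm_apply,
    integral_add (integrableOn_deriv u) (integrableOn_potential u ξ)]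
  simp only [LinearMap.coe_mk, AddHom.coe_mk, norm_real_smul_sq]

lemma mass_nonneg (u : deGennesDomain) : 0 ≤ mass u := by
  rw [mass_apply]
  positivity

lemma energy_nonneg (ξ : ℝ) (u : deGennesDomain) : 0 ≤ energy ξ u := by
  rw [energy_apply]
  positivity

/-- The form `u ↦ 2 ∫₀^∞ (t + ξ) |u|²`, the linear coefficient of `energy` at `ξ`. -/
def slope (ξ : ℝ) : QuadraticForm ℝ deGennesDomain :=
  energy (ξ + 1) - energy ξ - mass

lemma energy_add (ξ s : ℝ) (u : deGennesDomain) :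
    energy (ξ + s) u =
      energy ξ u + s * slope ξ u + s ^ 2 * mass u := by
  have hinterp : energy (ξ + s) u = (1 - s) * energy ξ u +
      s * energy (ξ + 1) u + (s ^ 2 - s) * mass u := by
    have hpair : IntegrableOn (fun t =>
        (1 - s) * (‖deriv (u : ℝ → ℂ) t‖ ^ 2 + (t + ξ) ^ 2 * ‖(u : ℝ → ℂ) t‖ ^ 2) +
        s * (‖deriv (u : ℝ → ℂ) t‖ ^ 2 + (t + (ξ + 1)) ^ 2 * ‖(u : ℝ → ℂ) t‖ ^ 2)) (Ioi 0) :=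
      ((integrableOn_energy u ξ).const_mul _).add ((integrableOn_energy u _).const_mul _)
    simp only [energy_apply, mass_apply, ← integral_const_mul]
    rw [← integral_add ((integrableOn_energy u ξ).const_mul _)
        ((integrableOn_energy u _).const_mul _),
      ← integral_add hpair ((integrableOn_mass u).const_mul _)]
    congr 1
    ext t
    ring
  rw [hinterp, slope, _root_.sub_apply, _root_.sub_apply]
  ring

lemma exists_mass_pos : ∃ u : deGennesDomain, 0 < mass u := by
  refine ⟨⟨fun t => (unitBump t : ℂ), mem_of_integrableOn (ξ := 0) contDiff_ofReal_unitBump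
    integrable_unitBump_norm_sq.integrableOn
    (integrable_unitBump_energy (by fun_prop)).integrableOn⟩, ?_⟩
  rw [mass_apply]
  exact integral_Ioi_unitBump_pos

lemma mass_smul (z : ℂ) (u : deGennesDomain) : mass (z • u) = ‖z‖ ^ 2 * mass u := by
  simp only [mass_apply, Submodule.coe_smul, Pi.smul_apply, norm_smul, mul_pow,
    integral_const_mul]

lemma energy_smul (ξ : ℝ) (z : ℂ) (u : deGennesDomain) :
    energy ξ (z • u) = ‖z‖ ^ 2 * energy ξ u := by
  have hderiv : deriv (z • (u : ℝ → ℂ)) = z • deriv (u : ℝ → ℂ) :=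
    funext fun t => deriv_const_smul z (differentiable u t)
  simp only [energy_apply, Submodule.coe_smul, hderiv, Pi.smul_apply, norm_smul, mul_pow,
    mul_left_comm _ (‖z‖ ^ 2), ← mul_add, integral_const_mul]

/-- The translate `t ↦ u (t + a)`. -/
def translate (u : deGennesDomain) {a : ℝ} (ha : 0 ≤ a) : deGennesDomain :=
  ⟨fun t => (u : ℝ → ℂ) (t + a), mem_of_integrableOn (ξ := a)
    ((contDiff u).comp (contDiff_id.add contDiff_const))
    ((integrableOn_Ioi_comp_add_right_iff a 0).2 <| (integrableOn_mass u).mono_set <|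
      Ioi_subset_Ioi (by linarith))
    (by
      simpa only [deriv_comp_add_const, add_zero] using
        (integrableOn_Ioi_comp_add_right_iff a 0).2 <| (integrableOn_energy u 0).mono_set <|
          Ioi_subset_Ioi (by linarith))⟩

lemma mass_translate (u : deGennesDomain) {a : ℝ} (ha : 0 ≤ a) :
    mass (translate u ha) = ∫ t in Ioi a, ‖(u : ℝ → ℂ) t‖ ^ 2 := by
  have h := setIntegral_Ioi_comp_add_right (fun t => ‖(u : ℝ → ℂ) t‖ ^ 2) a 0
  rw [zero_add] at h
  rw [mass_apply, ← h, translate]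

lemma energy_translate (ξ : ℝ) (u : deGennesDomain) {a : ℝ} (ha : 0 ≤ a) :
    energy (ξ + a) (translate u ha) =
      ∫ t in Ioi a, (‖deriv (u : ℝ → ℂ) t‖ ^ 2 + (t + ξ) ^ 2 * ‖(u : ℝ → ℂ) t‖ ^ 2) := by
  have h := setIntegral_Ioi_comp_add_right
    (fun t => ‖deriv (u : ℝ → ℂ) t‖ ^ 2 + (t + ξ) ^ 2 * ‖(u : ℝ → ℂ) t‖ ^ 2) a 0
  rw [zero_add] at h
  rw [energy_apply, ← h]
  simp only [translate, deriv_comp_add_const, add_comm ξ a, add_assoc]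

lemma mul_setIntegral_Ioc_le_of_eq_zero (ξ : ℝ) {v : deGennesDomain} {a : ℝ} (ha : 0 < a)
    (hva : (v : ℝ → ℂ) a = 0) :
    (a ^ 2)⁻¹ * ∫ t in Ioc 0 a, ‖(v : ℝ → ℂ) t‖ ^ 2 ≤
      ∫ t in Ioc 0 a, (‖deriv (v : ℝ → ℂ) t‖ ^ 2 + (t + ξ) ^ 2 * ‖(v : ℝ → ℂ) t‖ ^ 2) := by
  have hpoincare := intervalIntegral_norm_sq_le (contDiff v) hva ha.le
  rw [sub_zero, intervalIntegral.integral_of_le ha.le, intervalIntegral.integral_of_le ha.le]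
    at hpoincare
  calc (a ^ 2)⁻¹ * ∫ t in Ioc 0 a, ‖(v : ℝ → ℂ) t‖ ^ 2
      ≤ ∫ t in Ioc 0 a, ‖deriv (v : ℝ → ℂ) t‖ ^ 2 := (inv_mul_le_iff₀ (by positivity)).2 hpoincare
    _ ≤ _ := setIntegral_mono ((integrableOn_deriv v).mono_set Ioc_subset_Ioi_self)
        ((integrableOn_energy v ξ).mono_set Ioc_subset_Ioi_self)
        fun t => le_add_of_nonneg_right (by positivity)

end deGennesDomain

open deGennesDomain

lemma deGennes_eq_sInf (ξ : ℝ) :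
    deGennes ξ = sInf {q | ∃ u : deGennesDomain, 0 < mass u ∧ q = energy ξ u / mass u} := by
  refine congrArg sInf (Set.ext fun q => ⟨?_, ?_⟩)
  · rintro ⟨u, hu, hmass, henergy, hpos, rfl⟩
    refine ⟨⟨u, mem_of_integrableOn hu hmass henergy⟩, ?_, ?_⟩
    · rwa [mass_apply]
    · rw [mass_apply, energy_apply]
  · rintro ⟨u, hpos, rfl⟩
    refine ⟨u, contDiff u, integrableOn_mass u, integrableOn_energy u ξ, ?_, ?_⟩
    · rwa [← mass_apply]
    · rw [mass_apply, energy_apply]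

lemma le_deGennes_iff {C ξ : ℝ} :
    C ≤ deGennes ξ ↔ ∀ u : deGennesDomain, C * mass u ≤ energy ξ u := by
  obtain ⟨u₀, hu₀⟩ := exists_mass_pos
  have hbdd : BddBelow {q | ∃ u : deGennesDomain, 0 < mass u ∧ q = energy ξ u / mass u} :=
    ⟨0, by rintro _ ⟨u, -, rfl⟩; exact div_nonneg (energy_nonneg ξ u) (mass_nonneg u)⟩
  rw [deGennes_eq_sInf, le_csInf_iff hbdd ⟨_, u₀, hu₀, rfl⟩]
  constructor
  · intro h u
    rcases (mass_nonneg u).eq_or_lt with hu | hu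
    · rw [← hu, mul_zero]
      exact energy_nonneg ξ u
    · exact (le_div_iff₀ hu).1 (h _ ⟨u, hu, rfl⟩)
  · rintro h _ ⟨u, hu, rfl⟩
    exact (le_div_iff₀ hu).2 (h u)

lemma deGennes_mul_mass_le (ξ : ℝ) (u : deGennesDomain) : deGennes ξ * mass u ≤ energy ξ u :=
  le_deGennes_iff.1 le_rfl u

lemma deGennes_nonneg (ξ : ℝ) : 0 ≤ deGennes ξ :=
  le_deGennes_iff.2 fun u => by simpa using energy_nonneg ξ u

lemma Theta0_le (ξ : ℝ) : Theta0 ≤ deGennes ξ :=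
  ciInf_le ⟨0, forall_mem_range.2 deGennes_nonneg⟩ ξ

lemma Theta0_nonneg : 0 ≤ Theta0 := Real.iInf_nonneg deGennes_nonneg

lemma exists_energy_le_add (ξ : ℝ) {η : ℝ} (hη : 0 < η) :
    ∃ u : deGennesDomain, 0 < mass u ∧ energy ξ u ≤ (deGennes ξ + η) * mass u := by
  by_contra! h
  refine (lt_add_of_pos_right (deGennes ξ) hη).not_ge (le_deGennes_iff.2 fun u => ?_)
  rcases (mass_nonneg u).eq_or_lt with hu | hu
  · rw [← hu, mul_zero]
    exact energy_nonneg ξ u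
  · exact (h u hu).le

lemma sq_le_deGennes {ξ : ℝ} (hξ : 0 ≤ ξ) : ξ ^ 2 ≤ deGennes ξ := by
  refine le_deGennes_iff.2 fun u => ?_
  rw [mass_apply, energy_apply, ← integral_const_mul]
  refine setIntegral_mono_on ((integrableOn_mass u).const_mul _) (integrableOn_energy u ξ)
    measurableSet_Ioi fun t (ht : 0 < t) => ?_
  calc ξ ^ 2 * ‖(u : ℝ → ℂ) t‖ ^ 2 ≤ (t + ξ) ^ 2 * ‖(u : ℝ → ℂ) t‖ ^ 2 := by gcongr; linarith
    _ ≤ _ := le_add_of_nonneg_left (sq_nonneg _)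

lemma concaveOn_deGennes_sub_sq : ConcaveOn ℝ univ fun ξ => deGennes ξ - ξ ^ 2 := by
  refine ⟨convex_univ, fun x _ y _ a b ha hb hab => ?_⟩
  rw [le_sub_iff_add_le, le_deGennes_iff]
  intro u
  have hx := mul_le_mul_of_nonneg_left (deGennes_mul_mass_le x u) ha
  have hy := mul_le_mul_of_nonneg_left (deGennes_mul_mass_le y u) hb
  have henergy : ∀ ξ, energy ξ u = energy 0 u + ξ * slope 0 u + ξ ^ 2 * mass u := fun ξ => by
    simpa using energy_add 0 ξ u
  simp only [smul_eq_mul]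
  rw [henergy] at hx hy ⊢
  have : energy 0 u = a * energy 0 u + b * energy 0 u := by rw [← add_mul, hab, one_mul]
  linarith

lemma continuous_deGennes : Continuous deGennes := by
  have h := continuousOn_univ.1 (concaveOn_deGennes_sub_sq.continuousOn isOpen_univ)
  simpa only [sub_add_cancel] using h.fun_add (continuous_pow 2)

/-- A zero at `a` decouples `(0, a)` from `(a, ∞)`: Poincaré's inequality controls the first
interval, translation to the half-line the second. -/
lemma min_mul_mass_le_energy (ξ : ℝ) {v : deGennesDomain} {a : ℝ} (ha : 0 < a)
    (hva : (v : ℝ → ℂ) a = 0) :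
    min (a ^ 2)⁻¹ (deGennes (ξ + a)) * mass v ≤ energy ξ v := by
  have hsplit : ∀ {f : ℝ → ℝ}, IntegrableOn f (Ioi 0) →
      ∫ t in Ioi 0, f t = (∫ t in Ioc 0 a, f t) + ∫ t in Ioi a, f t := fun hf => by
    rw [← Ioc_union_Ioi_eq_Ioi ha.le, setIntegral_union Ioc_disjoint_Ioi_same measurableSet_Ioi
      (hf.mono_set Ioc_subset_Ioi_self) (hf.mono_set (Ioi_subset_Ioi ha.le))]
  have hleft := mul_setIntegral_Ioc_le_of_eq_zero ξ ha hva
  have hright := deGennes_mul_mass_le (ξ + a) (deGennesDomain.translate v ha.le)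
  rw [mass_translate, energy_translate] at hright
  rw [mass_apply, energy_apply, hsplit (integrableOn_mass v), hsplit (integrableOn_energy v ξ),
    mul_add]
  refine add_le_add (le_trans ?_ hleft) (le_trans ?_ hright)
  · gcongr
    exact min_le_left _ _
  · gcongr
    exact min_le_right _ _

section UniqueMinimum

variable {ξ₀ : ℝ} (hmin : deGennes ξ₀ = Theta0) (huniq : ∀ ξ, deGennes ξ = Theta0 → ξ = ξ₀)

include huniq in
lemma Theta0_lt_deGennes {ξ : ℝ} (hξ : ξ ≠ ξ₀) : Theta0 < deGennes ξ :=
  (Theta0_le ξ).lt_of_ne fun h => hξ (huniq ξ h.symm)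

include huniq in
lemma exists_spectral_gap : ∃ a, ∃ c > 0, ∀ v : deGennesDomain, (v : ℝ → ℂ) a = 0 →
    (Theta0 + c) * mass v ≤ energy ξ₀ v := by
  have hT := Theta0_nonneg
  have ha : 0 < (Theta0 + 1)⁻¹ := by positivity
  refine ⟨(Theta0 + 1)⁻¹, min ((Theta0 + 1)⁻¹ ^ 2)⁻¹ (deGennes (ξ₀ + (Theta0 + 1)⁻¹)) - Theta0,
    ?_, fun v hv => ?_⟩
  · rw [gt_iff_lt, sub_pos, lt_min_iff, inv_pow, inv_inv]
    exact ⟨by nlinarith, Theta0_lt_deGennes huniq (by simp [ha.ne'])⟩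
  · rw [add_sub_cancel]
    exact min_mul_mass_le_energy ξ₀ ha hv

include hmin huniq in
lemma exists_add_eq_of_spectral_gap : ∃ c > 0, ∀ θ > 0, ∀ u : deGennesDomain, ∃ φ v, φ + v = u ∧
    (energy ξ₀ - Theta0 • mass) φ ≤ θ ^ 2 * mass φ ∧
    c * mass v ≤ (energy ξ₀ - Theta0 • mass) v := by
  simp only [_root_.sub_apply, _root_.smul_apply, smul_eq_mul, sub_le_iff_le_add,
    le_sub_iff_add_le]
  obtain ⟨a, c, hc, hgap⟩ := exists_spectral_gap huniq
  refine ⟨c, hc, fun θ hθ u => ?_⟩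
  obtain ⟨φ₀, hφ₀, hlow⟩ := exists_energy_le_add ξ₀ (η := min (θ ^ 2) (c / 2)) (by positivity)
  rw [hmin] at hlow
  have hne : (φ₀ : ℝ → ℂ) a ≠ 0 := fun h => by
    have hle := le_of_mul_le_mul_right ((hgap φ₀ h).trans hlow) hφ₀
    linarith [min_le_right (θ ^ 2) (c / 2)]
  let φ : deGennesDomain := ((u : ℝ → ℂ) a / (φ₀ : ℝ → ℂ) a) • φ₀
  refine ⟨φ, u - φ, add_sub_cancel _ _, ?_, ?_⟩
  · rw [mass_smul, energy_smul, mul_left_comm, mul_left_comm Theta0, ← mul_add]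
    gcongr
    calc energy ξ₀ φ₀ ≤ (Theta0 + min (θ ^ 2) (c / 2)) * mass φ₀ := hlow
      _ ≤ (Theta0 + θ ^ 2) * mass φ₀ := by
          gcongr
          exact min_le_left _ _
      _ = _ := by ring
  · rw [← add_mul, add_comm c]
    refine hgap _ ?_
    simp [φ, hne]

include hmin huniq in
/-- The spectral gap makes up for the missing regularity of `deGennes`: the quadratic forms
`energy (ξ₀ + s)` are a quadratic pencil in `s`. -/
lemma exists_deGennes_cubic_lower_bound (hpos : 0 < 1 / 2 * iteratedDeriv 2 deGennes ξ₀) :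
    ∃ C > 0, ∃ s₀ > 0, ∀ s, |s| < s₀ →
      Theta0 + 1 / 2 * iteratedDeriv 2 deGennes ξ₀ * s ^ 2 - C * |s| ^ 3 ≤ deGennes (ξ₀ + s) := by
  have hiter : iteratedDeriv 2 deGennes ξ₀ = deriv (deriv deGennes) ξ₀ := by
    rw [iteratedDeriv_succ, iteratedDeriv_one]
  rw [hiter] at hpos ⊢
  have hderiv : deriv deGennes ξ₀ = 0 :=
    IsLocalMin.deriv_eq_zero (Eventually.of_forall fun ξ => hmin ▸ Theta0_le ξ)
  obtain ⟨c, hc, hsplit⟩ := exists_add_eq_of_spectral_gap hmin huniq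
  have hpencil : ∀ σ (u : deGennesDomain), (energy ξ₀ - Theta0 • mass) u + σ * slope ξ₀ u =
      energy (ξ₀ + σ) u - Theta0 * mass u - σ ^ 2 * mass u := fun σ u => by
    rw [energy_add, _root_.sub_apply, _root_.smul_apply, smul_eq_mul]
    ring
  have hnonneg : ∀ ξ u, 0 ≤ energy ξ u - Theta0 * mass u := fun ξ u =>
    sub_nonneg.2 <| (mul_le_mul_of_nonneg_right (Theta0_le ξ) (mass_nonneg u)).trans
      (deGennes_mul_mass_le ξ u)
  have hbound : ∀ κ > 0, ∀ᶠ σ in 𝓝 (0 : ℝ), ∀ u : deGennesDomain,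
      (1 / 2 * deriv (deriv deGennes) ξ₀ - 1 - κ) * σ ^ 2 * mass u ≤
        (energy ξ₀ - Theta0 • mass) u + σ * slope ξ₀ u := fun κ hκ => by
    have hquad := eventually_add_mul_sq_le_of_deriv_deriv continuous_deGennes.continuousAt hderiv
      (by linarith) (sub_lt_self (1 / 2 * deriv (deriv deGennes) ξ₀) hκ)
    rw [← map_add_left_nhds_zero, eventually_map] at hquad
    filter_upwards [hquad] with σ hσ u
    have h := le_deGennes_iff.1 hσ u
    rw [hmin, add_sub_cancel_left] at h
    rw [hpencil]
    linarith
  obtain ⟨C, hC, s₀, hs₀, hcubic⟩ := exists_cubic_lower_bound (fun u => hnonneg ξ₀ u) mass_nonneg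
    (fun σ u => by rw [hpencil]; linarith [hnonneg (ξ₀ + σ) u]) hc hsplit hbound
  refine ⟨C, hC, s₀, hs₀, fun s hs => le_deGennes_iff.2 fun u => ?_⟩
  have h := hcubic s hs u
  rw [hpencil] at h
  linarith

include huniq in
lemma exists_add_le_deGennes {ξ₁ : ℝ} (hξ₁ : ξ₀ < ξ₁) :
    ∃ c > 0, ∀ ξ, ξ₁ ≤ ξ → Theta0 + c ≤ deGennes ξ := by
  obtain ⟨S, hS⟩ := (tendsto_atTop_mono' atTop
    ((eventually_ge_atTop 0).mono fun ξ hξ => sq_le_deGennes hξ)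
    (tendsto_pow_atTop two_ne_zero)).eventually_ge_atTop (Theta0 + 1) |>.exists_forall_of_atTop
  obtain ⟨x, hx, hxmin⟩ := isCompact_Icc.exists_isMinOn
    (nonempty_Icc.2 (le_max_left ξ₁ S)) continuous_deGennes.continuousOn
  have hlt : Theta0 < deGennes x := Theta0_lt_deGennes huniq (hξ₁.trans_le hx.1).ne'
  refine ⟨min 1 (deGennes x - Theta0), lt_min one_pos (sub_pos.2 hlt), fun ξ hξ => ?_⟩
  rcases le_total ξ (max ξ₁ S) with h | h
  · linarith [isMinOn_iff.1 hxmin ξ ⟨hξ, h⟩, min_le_right 1 (deGennes x - Theta0)]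
  · linarith [hS ξ ((le_max_right _ _).trans h), min_le_left 1 (deGennes x - Theta0)]

end UniqueMinimum

end DeGennes

section Schrodinger

/-- `E` is a lower bound for the quadratic form of the Schrödinger operator `-d²/dρ² + V` on the
line, tested on functions of class `C¹` with finite mass and energy. -/
def IsSchrodingerLowerBound (V : ℝ → ℝ) (E : ℝ) : Prop :=
  ∀ u : ℝ → ℂ, ContDiff ℝ 1 u → Integrable (fun ρ => ‖u ρ‖ ^ 2) →
    Integrable (fun ρ => ‖deriv u ρ‖ ^ 2 + V ρ * ‖u ρ‖ ^ 2) →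
    E * ∫ ρ, ‖u ρ‖ ^ 2 ≤ ∫ ρ, (‖deriv u ρ‖ ^ 2 + V ρ * ‖u ρ‖ ^ 2)

namespace IsSchrodingerLowerBound

variable {V : ℝ → ℝ} {E : ℝ}

lemma apply_of_hasCompactSupport (h : IsSchrodingerLowerBound V E) (hV : Continuous V)
    {u : ℝ → ℂ} (hu : ContDiff ℝ 1 u) (hc : HasCompactSupport u) :
    E * ∫ ρ, ‖u ρ‖ ^ 2 ≤ ∫ ρ, (‖deriv u ρ‖ ^ 2 + V ρ * ‖u ρ‖ ^ 2) :=
  h u hu (integrable_norm_sq_of_hasCompactSupport hu.continuous hc)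
    (integrable_energy_of_hasCompactSupport hu hc hV)

lemma of_nonpos (hV : ∀ ρ, 0 ≤ V ρ) (hE : E ≤ 0) : IsSchrodingerLowerBound V E := fun u _ _ _ =>
  (mul_nonpos_of_nonpos_of_nonneg hE (by positivity)).trans <|
    integral_nonneg fun ρ => add_nonneg (by positivity) (mul_nonneg (hV ρ) (by positivity))

lemma le_of_le (h : IsSchrodingerLowerBound V E) (hV : Continuous V) {W : ℝ → ℝ}
    (hW : Continuous W) (hVW : ∀ ρ, V ρ ≤ W ρ) :
    E ≤ (∫ ρ, (‖deriv (fun t => (unitBump t : ℂ)) ρ‖ ^ 2 + W ρ * ‖(unitBump ρ : ℂ)‖ ^ 2)) /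
      ∫ ρ, ‖(unitBump ρ : ℂ)‖ ^ 2 := by
  rw [le_div_iff₀ integral_unitBump_pos]
  refine (h.apply_of_hasCompactSupport hV contDiff_ofReal_unitBump
    hasCompactSupport_ofReal_unitBump).trans
    (integral_mono (integrable_unitBump_energy hV) (integrable_unitBump_energy hW) fun ρ => ?_)
  dsimp only
  gcongr
  exact hVW ρ

lemma sub_const (h : IsSchrodingerLowerBound V E) (e : ℝ) :
    IsSchrodingerLowerBound (fun ρ => V ρ - e) (E - e) := fun u hu hmass henergy => by
  have hsplit : (fun ρ => ‖deriv u ρ‖ ^ 2 + V ρ * ‖u ρ‖ ^ 2) =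
      fun ρ => ‖deriv u ρ‖ ^ 2 + (V ρ - e) * ‖u ρ‖ ^ 2 + e * ‖u ρ‖ ^ 2 := by
    funext ρ
    ring
  have hV := h u hu hmass (hsplit ▸ henergy.add (hmass.const_mul e))
  rw [hsplit, integral_add henergy (hmass.const_mul e), integral_const_mul] at hV
  linarith

/-- Spread out a trial function: its kinetic energy per unit mass vanishes in the limit. -/
lemma nonpos (h : IsSchrodingerLowerBound V E) (hV : Continuous V) (hV0 : ∀ ρ, V ρ ≤ 0) :
    E ≤ 0 := by
  set u : ℝ → ℂ := fun ρ => (unitBump ρ : ℂ)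
  have hscaled : ∀ c : ℝ, 0 < c → E * ∫ ρ, ‖u ρ‖ ^ 2 ≤ c ^ 2 * ∫ ρ, ‖deriv u ρ‖ ^ 2 := by
    intro c hc
    have hsmooth : ContDiff ℝ 1 fun ρ => u (c * ρ) := contDiff_ofReal_unitBump.comp (by fun_prop)
    have hsupp : HasCompactSupport fun ρ => u (c * ρ) :=
      hasCompactSupport_ofReal_unitBump.comp_homeomorph (Homeomorph.mulLeft₀ c hc.ne')
    have henergy := integrable_norm_sq_of_hasCompactSupport (hsmooth.continuous_deriv le_rfl)
      hsupp.deriv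
    have htest := (h.apply_of_hasCompactSupport hV hsmooth hsupp).trans <| integral_mono
      (integrable_energy_of_hasCompactSupport hsmooth hsupp hV) henergy fun ρ =>
        add_le_of_nonpos_right (mul_nonpos_of_nonpos_of_nonneg (hV0 ρ) (by positivity))
    simp only [deriv_comp_mul_left, norm_real_smul_sq, integral_const_mul] at htest
    rw [Measure.integral_comp_mul_left (fun ρ => ‖u ρ‖ ^ 2),
      Measure.integral_comp_mul_left (fun ρ => ‖deriv u ρ‖ ^ 2), smul_eq_mul, smul_eq_mul,
      mul_left_comm, mul_left_comm (c ^ 2)] at htest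
    exact le_of_mul_le_mul_left htest (by positivity)
  have hlim : Tendsto (fun c : ℝ => c ^ 2 * ∫ ρ, ‖deriv u ρ‖ ^ 2) (𝓝[>] 0) (𝓝 0) := by
    refine ((Continuous.tendsto' ?_ 0 0 (by simp)).mono_left nhdsWithin_le_nhds)
    fun_prop
  exact nonpos_of_mul_nonpos_left
    (ge_of_tendsto hlim (eventually_mem_nhdsWithin.mono hscaled)) integral_unitBump_pos

end IsSchrodingerLowerBound

section Montgomery

lemma isSchrodingerLowerBound_montgomeryMod_of_ne_zero {δ ζ : ℝ} (h : montgomeryMod δ ζ ≠ 0) :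
    IsSchrodingerLowerBound (fun ρ => δ * (ζ + ρ ^ 2 / 2) ^ 2) (montgomeryMod δ ζ) := by
  intro u hu hmass henergy
  have hnonneg : 0 ≤ ∫ ρ, ‖u ρ‖ ^ 2 := by positivity
  rcases hnonneg.eq_or_lt with hzero | hpos
  · have hae := (integral_eq_zero_iff_of_nonneg (fun ρ => by positivity) hmass).1 hzero.symm
    have hu0 : u = 0 := hu.continuous.ae_eq_iff_eq volume continuous_zero |>.1 <| by
      filter_upwards [hae] with ρ hρ
      simpa using hρ
    simp [hu0]
  · rw [← le_div_iff₀ hpos]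
    refine csInf_le ?_ ⟨u, hu, hmass, henergy, hpos, rfl⟩
    by_contra hbdd
    exact h (Real.sInf_of_not_bddBelow hbdd)

lemma isSchrodingerLowerBound_montgomeryMod {δ : ℝ} (hδ : 0 ≤ δ) (ζ : ℝ) :
    IsSchrodingerLowerBound (fun ρ => δ * (ζ + ρ ^ 2 / 2) ^ 2) (montgomeryMod δ ζ) := by
  by_cases h : montgomeryMod δ ζ = 0
  · exact .of_nonpos (fun ρ => by positivity) h.le
  · exact isSchrodingerLowerBound_montgomeryMod_of_ne_zero h

lemma montgomeryMod_nonpos {δ : ℝ} (hδ : δ ≤ 0) (ζ : ℝ) : montgomeryMod δ ζ ≤ 0 := by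
  by_contra! h
  exact h.not_ge <| (isSchrodingerLowerBound_montgomeryMod_of_ne_zero h.ne').nonpos (by fun_prop)
    fun ρ => mul_nonpos_of_nonpos_of_nonneg hδ (by positivity)

lemma exists_montgomeryMod_le {δ : ℝ} (hδ : 0 ≤ δ) (C : ℝ) :
    ∃ M, ∀ ζ, |ζ| ≤ C → montgomeryMod δ ζ ≤ M := by
  refine ⟨_, fun ζ hζ => (isSchrodingerLowerBound_montgomeryMod hδ ζ).le_of_le (by fun_prop)
    (W := fun ρ => δ * (C + ρ ^ 2 / 2) ^ 2) (by fun_prop) fun ρ => ?_⟩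
  refine mul_le_mul_of_nonneg_left (sq_le_sq' ?_ ?_) hδ
  · linarith [neg_le_of_abs_le hζ, sq_nonneg ρ]
  · linarith [le_of_abs_le hζ]

end Montgomery

section Localization

/-- The angle `θ` of the partition of unity `cos² θ + sin² θ = 1` in which `cos θ` is supported in
`[-2R, 2R]` and `sin θ` outside `[-R, R]`. -/
def partitionAngle (R ρ : ℝ) : ℝ := π / 2 * (1 - unitBump (R⁻¹ * ρ))

lemma contDiff_partitionAngle (R : ℝ) : ContDiff ℝ 1 (partitionAngle R) :=
  contDiff_const.mul (contDiff_const.sub (unitBump.contDiff.comp (by fun_prop)))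

lemma cos_partitionAngle_eq_zero {R ρ : ℝ} (hR : 0 < R) (hρ : 2 * R ≤ |ρ|) :
    cos (partitionAngle R ρ) = 0 := by
  have h : 2 ≤ |R⁻¹ * ρ| := by
    rwa [abs_mul, abs_of_pos (inv_pos.2 hR), le_inv_mul_iff₀ hR, mul_comm]
  rw [partitionAngle, unitBump_eq_zero h, sub_zero, mul_one, cos_pi_div_two]

lemma sin_partitionAngle_eq_zero {R ρ : ℝ} (hR : 0 < R) (hρ : |ρ| ≤ R) :
    sin (partitionAngle R ρ) = 0 := by
  have h : |R⁻¹ * ρ| ≤ 1 := by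
    rwa [abs_mul, abs_of_pos (inv_pos.2 hR), inv_mul_le_iff₀ hR, mul_one]
  rw [partitionAngle, unitBump_eq_one h, sub_self, mul_zero, sin_zero]

lemma exists_sq_deriv_partitionAngle_le :
    ∃ L > 0, ∀ R ρ, deriv (partitionAngle R) ρ ^ 2 ≤ L / R ^ 2 := by
  obtain ⟨K, hK⟩ := unitBump.hasCompactSupport.deriv.exists_bound_of_continuous
    ((unitBump.contDiff (n := 1)).continuous_deriv le_rfl)
  refine ⟨(π / 2 * K) ^ 2 + 1, by positivity, fun R ρ => ?_⟩
  have hderiv : deriv (partitionAngle R) ρ = π / 2 * (-(R⁻¹ * deriv unitBump (R⁻¹ * ρ))) := by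
    unfold partitionAngle
    rw [deriv_const_mul_field, deriv_const_sub, deriv_comp_mul_left, smul_eq_mul]
  calc deriv (partitionAngle R) ρ ^ 2 = (π / 2 * ‖deriv unitBump (R⁻¹ * ρ)‖) ^ 2 / R ^ 2 := by
        rw [hderiv, mul_pow _ ‖_‖, Real.norm_eq_abs, sq_abs]
        ring
    _ ≤ ((π / 2 * K) ^ 2 + 1) / R ^ 2 := by
        gcongr
        exact le_add_of_le_of_nonneg (by gcongr; exact hK _) zero_le_one

lemma norm_cos_smul_add_sin_smul_sq_le {F : Type*} [NormedAddCommGroup F] [NormedSpace ℝ F]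
    (θ : ℝ) (a b : F) : ‖cos θ • a + sin θ • b‖ ^ 2 ≤ ‖a‖ ^ 2 + ‖b‖ ^ 2 := by
  calc ‖cos θ • a + sin θ • b‖ ^ 2 ≤ (|cos θ| * ‖a‖ + |sin θ| * ‖b‖) ^ 2 := by
        gcongr
        simpa only [norm_smul, Real.norm_eq_abs] using norm_add_le (cos θ • a) (sin θ • b)
    _ ≤ (|cos θ| ^ 2 + |sin θ| ^ 2) * (‖a‖ ^ 2 + ‖b‖ ^ 2) := by
        linarith [sq_nonneg (|sin θ| * ‖a‖ - |cos θ| * ‖b‖)]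
    _ = ‖a‖ ^ 2 + ‖b‖ ^ 2 := by rw [sq_abs, sq_abs, cos_sq_add_sin_sq, one_mul]

lemma norm_deriv_cos_smul_sq_le {F : Type*} [NormedAddCommGroup F] [NormedSpace ℝ F]
    {θ : ℝ → ℝ} {u : ℝ → F} {ρ : ℝ} (hθ : DifferentiableAt ℝ θ ρ) (hu : DifferentiableAt ℝ u ρ) :
    ‖deriv (fun x => cos (θ x) • u x) ρ‖ ^ 2 ≤ ‖deriv u ρ‖ ^ 2 + deriv θ ρ ^ 2 * ‖u ρ‖ ^ 2 := by
  have hderiv : deriv (fun x => cos (θ x) • u x) ρ =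
      cos (θ ρ) • deriv u ρ + sin (θ ρ) • (-deriv θ ρ) • u ρ := by
    rw [smul_smul, mul_neg, ← neg_mul]
    exact (hθ.hasDerivAt.cos.smul hu.hasDerivAt).deriv
  rw [hderiv, ← neg_sq (deriv θ ρ), ← norm_real_smul_sq]
  exact norm_cos_smul_add_sin_smul_sq_le _ _ _

lemma mul_cos_sq_add_mul_one_sub_cos_sq_le {U V : ℝ → ℝ} {E R : ℝ} (hR : 0 < R)
    (hnear : ∀ ρ, |ρ| ≤ 2 * R → U ρ ≤ V ρ) (hfar : ∀ ρ, R ≤ |ρ| → E ≤ V ρ) (ρ : ℝ) :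
    U ρ * cos (partitionAngle R ρ) ^ 2 + E * (1 - cos (partitionAngle R ρ) ^ 2) ≤ V ρ := by
  rw [← sin_sq]
  have hcos : U ρ * cos (partitionAngle R ρ) ^ 2 ≤ V ρ * cos (partitionAngle R ρ) ^ 2 := by
    rcases le_total |ρ| (2 * R) with h | h
    · gcongr
      exact hnear ρ h
    · simp [cos_partitionAngle_eq_zero hR h]
  have hsin : E * sin (partitionAngle R ρ) ^ 2 ≤ V ρ * sin (partitionAngle R ρ) ^ 2 := by
    rcases le_total R |ρ| with h | h
    · gcongr
      exact hfar ρ h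
    · simp [sin_partitionAngle_eq_zero hR h]
  linear_combination hcos + hsin + V ρ * cos_sq_add_sin_sq (partitionAngle R ρ)

/-- The IMS localization formula: near the origin `V` is compared with `U`, far away with `E`. -/
theorem exists_isSchrodingerLowerBound_of_localized : ∃ L > 0, ∀ {U V : ℝ → ℝ} {E R : ℝ}, 0 < R →
    Continuous U → IsSchrodingerLowerBound U E → (∀ ρ, |ρ| ≤ 2 * R → U ρ ≤ V ρ) →
    (∀ ρ, R ≤ |ρ| → E ≤ V ρ) → IsSchrodingerLowerBound V (E - L / R ^ 2) := by
  obtain ⟨L, hL, hangle⟩ := exists_sq_deriv_partitionAngle_le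
  refine ⟨L, hL, fun {U V E R} hR hUc hU hnear hfar u hu hmass henergy => ?_⟩
  set v : ℝ → ℂ := fun ρ => cos (partitionAngle R ρ) • u ρ with hv
  have hvc : ContDiff ℝ 1 v := (contDiff_cos.comp (contDiff_partitionAngle R)).smul hu
  have hvs : HasCompactSupport v :=
    .intro (isCompact_closedBall (0 : ℝ) (2 * R)) fun ρ hρ => by
      rw [Metric.mem_closedBall, dist_zero_right, Real.norm_eq_abs, not_le] at hρ
      rw [hv]
      simp only [cos_partitionAngle_eq_zero hR hρ.le, zero_smul]
  have hvmass := integrable_norm_sq_of_hasCompactSupport hvc.continuous hvs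
  have hvenergy := integrable_energy_of_hasCompactSupport hvc hvs hUc
  have hpointwise : ∀ ρ, ‖deriv v ρ‖ ^ 2 + U ρ * ‖v ρ‖ ^ 2 + (E - L / R ^ 2) * ‖u ρ‖ ^ 2 ≤
      ‖deriv u ρ‖ ^ 2 + V ρ * ‖u ρ‖ ^ 2 + E * ‖v ρ‖ ^ 2 := fun ρ => by
    have hkinetic := (norm_deriv_cos_smul_sq_le
      ((contDiff_partitionAngle R).differentiable one_ne_zero ρ)
      (hu.differentiable one_ne_zero ρ)).trans
      (add_le_add_right (mul_le_mul_of_nonneg_right (hangle R ρ) (sq_nonneg _)) _)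
    have := mul_le_mul_of_nonneg_right
      (mul_cos_sq_add_mul_one_sub_cos_sq_le hR hnear hfar ρ) (sq_nonneg ‖u ρ‖)
    simp only [hv, norm_real_smul_sq]
    linarith
  have hint := integral_mono (hvenergy.add (hmass.const_mul (E - L / R ^ 2)))
    (henergy.add (hvmass.const_mul E)) hpointwise
  rw [integral_add' hvenergy (hmass.const_mul _), integral_add' henergy (hvmass.const_mul _),
    integral_const_mul, integral_const_mul] at hint
  linarith [hU v hvc hvmass hvenergy]

end Localization

end Schrodinger

section Slicing

open deGennesDomain

section PartialDerivatives

variable {F : Type*} [NormedAddCommGroup F] [NormedSpace ℝ F] {ψ : ℝ × ℝ → F} {τ ρ : ℝ}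

lemma deriv_slice_left (h : DifferentiableAt ℝ ψ (τ, ρ)) :
    deriv (fun t => ψ (t, ρ)) τ = fderiv ℝ ψ (τ, ρ) (1, 0) :=
  (h.hasFDerivAt.comp_hasDerivAt τ ((hasDerivAt_id τ).prodMk (hasDerivAt_const τ ρ))).deriv

lemma deriv_slice_right (h : DifferentiableAt ℝ ψ (τ, ρ)) :
    deriv (fun r => ψ (τ, r)) ρ = fderiv ℝ ψ (τ, ρ) (0, 1) :=
  (h.hasFDerivAt.comp_hasDerivAt ρ ((hasDerivAt_const ρ τ).prodMk (hasDerivAt_id ρ))).deriv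

end PartialDerivatives

lemma volume_restrict_halfPlane : (volume : Measure (ℝ × ℝ)).restrict halfPlane =
    ((volume : Measure ℝ).restrict (Ioi 0)).prod (volume : Measure ℝ) := by
  rw [halfPlane, Measure.volume_eq_prod, ← Measure.prod_restrict, Measure.restrict_univ]

lemma IsSchrodingerLowerBound.mul_setIntegral_halfPlane_le {V : ℝ → ℝ} {E : ℝ}
    (h : IsSchrodingerLowerBound V E) {ψ : ℝ × ℝ → ℂ} (hψ : ContDiff ℝ 1 ψ)
    (hmass : IntegrableOn (fun p => ‖ψ p‖ ^ 2) halfPlane)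
    (henergy : IntegrableOn (fun p => ‖fderiv ℝ ψ p (0, 1)‖ ^ 2 + V p.2 * ‖ψ p‖ ^ 2) halfPlane) :
    E * ∫ p in halfPlane, ‖ψ p‖ ^ 2 ≤
      ∫ p in halfPlane, (‖fderiv ℝ ψ p (0, 1)‖ ^ 2 + V p.2 * ‖ψ p‖ ^ 2) := by
  rw [IntegrableOn, volume_restrict_halfPlane] at hmass henergy
  have hderiv : ∀ τ ρ, deriv (fun r => ψ (τ, r)) ρ = fderiv ℝ ψ (τ, ρ) (0, 1) := fun τ ρ =>
    deriv_slice_right (hψ.differentiable one_ne_zero _)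
  rw [← integral_const_mul, volume_restrict_halfPlane, integral_prod _ (hmass.const_mul E),
    integral_prod _ henergy]
  refine integral_mono_ae (hmass.const_mul E).integral_prod_left henergy.integral_prod_left ?_
  filter_upwards [hmass.prod_right_ae, henergy.prod_right_ae] with τ hmassτ henergyτ
  have hτ := h (fun ρ => ψ (τ, ρ)) (hψ.comp (contDiff_const.prodMk contDiff_id)) hmassτ
    (by simpa only [hderiv] using henergyτ)
  simpa only [integral_const_mul, hderiv] using hτ

variable {B : ℝ} {m : ℤ} {ψ : ℝ × ℝ → ℂ}

namespace InFormDomain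

lemma integrableOn_transverse (hψ : InFormDomain B m ψ) (hB : 0 ≤ B) :
    IntegrableOn (fun p => ‖fderiv ℝ ψ p (1, 0)‖ ^ 2 + qPot B m p * ‖ψ p‖ ^ 2) halfPlane := by
  have hq : ∀ p, 0 ≤ qPot B m p := fun p => sq_nonneg _
  have hcont : Continuous (qPot B m) := by unfold qPot; fun_prop
  have hfderiv := (hψ.1.continuous_fderiv one_ne_zero).clm_apply
    (continuous_const (y := ((1 : ℝ), (0 : ℝ))))
  have hc := hψ.1.continuous
  refine hψ.2.2.mono' (by fun_prop) (ae_of_all _ fun p => ?_)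
  have := hq p
  rw [Real.norm_of_nonneg (by positivity)]
  exact le_add_of_nonneg_right (by positivity)

lemma integrableOn_longitudinal (hψ : InFormDomain B m ψ) (hB : 0 < B) :
    IntegrableOn (fun p => ‖fderiv ℝ ψ p (0, 1)‖ ^ 2) halfPlane := by
  have h := (hψ.2.2.sub (hψ.integrableOn_transverse hB.le)).const_mul (B ^ (-(1 : ℝ) / 3))⁻¹
  refine h.congr (ae_of_all _ fun p => ?_)
  have : B ^ (-(1 : ℝ) / 3) ≠ 0 := (rpow_pos_of_pos hB _).ne'
  simp only [Pi.sub_apply, qIntegrand]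
  field_simp
  ring

lemma setIntegral_le_transverse (hψ : InFormDomain B m ψ) (hB : 0 ≤ B) {W : ℝ → ℝ}
    (hW : ∀ ρ, W ρ ≤ deGennes (((m : ℝ) - B / 2) / √B + B ^ (-(1 : ℝ) / 6) * ρ ^ 2 / 2))
    (hint : IntegrableOn (fun p => W p.2 * ‖ψ p‖ ^ 2) halfPlane) :
    ∫ p in halfPlane, W p.2 * ‖ψ p‖ ^ 2 ≤
      ∫ p in halfPlane, (‖fderiv ℝ ψ p (1, 0)‖ ^ 2 + qPot B m p * ‖ψ p‖ ^ 2) := by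
  have hmass := hψ.2.1
  have henergy := hψ.integrableOn_transverse hB
  rw [IntegrableOn, volume_restrict_halfPlane] at hmass henergy hint
  rw [volume_restrict_halfPlane, integral_prod_symm _ hint, integral_prod_symm _ henergy]
  refine integral_mono_ae hint.integral_prod_right henergy.integral_prod_right ?_
  filter_upwards [hmass.prod_left_ae, henergy.prod_left_ae] with ρ hmassρ henergyρ
  have hdensity : ∀ τ, ‖fderiv ℝ ψ (τ, ρ) (1, 0)‖ ^ 2 + qPot B m (τ, ρ) * ‖ψ (τ, ρ)‖ ^ 2 =
      ‖deriv (fun t => ψ (t, ρ)) τ‖ ^ 2 + (τ + (((m : ℝ) - B / 2) / √B +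
        B ^ (-(1 : ℝ) / 6) * ρ ^ 2 / 2)) ^ 2 * ‖ψ (τ, ρ)‖ ^ 2 := fun τ => by
    rw [deriv_slice_left (hψ.1.differentiable one_ne_zero _), qPot]
    simp only [add_assoc]
  simp only [hdensity] at henergyρ ⊢
  let u : deGennesDomain := ⟨fun τ => ψ (τ, ρ),
    mem_of_integrableOn (hψ.1.comp (contDiff_id.prodMk contDiff_const)) hmassρ henergyρ⟩
  have hu := (mul_le_mul_of_nonneg_right (hW ρ) (mass_nonneg u)).trans (deGennes_mul_mass_le _ u)
  rwa [mass_apply, energy_apply, ← integral_const_mul] at hu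

theorem mul_setIntegral_le_qForm (hψ : InFormDomain B m ψ) (hB : 0 < B) {c E M : ℝ} {V : ℝ → ℝ}
    (hVc : Continuous V) (hVM : ∀ ρ, |V ρ| ≤ M) (hE : IsSchrodingerLowerBound V E)
    (hV : ∀ ρ, c + B ^ (-(1 : ℝ) / 3) * V ρ ≤
      deGennes (((m : ℝ) - B / 2) / √B + B ^ (-(1 : ℝ) / 6) * ρ ^ 2 / 2)) :
    (c + B ^ (-(1 : ℝ) / 3) * E) * ∫ p in halfPlane, ‖ψ p‖ ^ 2 ≤ qForm B m ψ := by
  set b := B ^ (-(1 : ℝ) / 3)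
  have hb : 0 ≤ b := by positivity
  have hmass := hψ.2.1
  have hlong := hψ.integrableOn_longitudinal hB
  have hpot : IntegrableOn (fun p => V p.2 * ‖ψ p‖ ^ 2) halfPlane := by
    have hc := hψ.1.continuous
    refine (hmass.const_mul M).mono' (by fun_prop) (ae_of_all _ fun p => ?_)
    rw [norm_mul, norm_pow, norm_norm]
    gcongr
    exact hVM _
  have hsum : (fun p => (c + b * V p.2) * ‖ψ p‖ ^ 2) =
      fun p => c * ‖ψ p‖ ^ 2 + b * (V p.2 * ‖ψ p‖ ^ 2) := by
    simp only [add_mul, mul_assoc]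
  have htransverse := hψ.setIntegral_le_transverse hB.le hV <| by
    rw [hsum]
    exact (hmass.const_mul c).add (hpot.const_mul b)
  have hlongitudinal := mul_le_mul_of_nonneg_left
    (hE.mul_setIntegral_halfPlane_le hψ.1 hmass (hlong.add hpot)) hb
  have hqForm : qForm B m ψ =
      (∫ p in halfPlane, (‖fderiv ℝ ψ p (1, 0)‖ ^ 2 + qPot B m p * ‖ψ p‖ ^ 2)) +
        b * ∫ p in halfPlane, ‖fderiv ℝ ψ p (0, 1)‖ ^ 2 := by
    rw [← integral_const_mul]
    exact integral_add (hψ.integrableOn_transverse hB.le) (hlong.const_mul b)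
  rw [hsum, integral_add (hmass.const_mul c) (hpot.const_mul b), integral_const_mul,
    integral_const_mul] at htransverse
  rw [integral_add hlong hpot] at hlongitudinal
  rw [hqForm]
  linarith

end InFormDomain

end Slicing

section EffectivePotential

section Rescaling

variable {f : ℝ → ℝ} {d C s₀ : ℝ}

lemma eventually_sub_le_rescaling (hs₀ : 0 < s₀) (hC : 0 ≤ C)
    (hf : ∀ s, |s| < s₀ → d * s ^ 2 - C * |s| ^ 3 ≤ f s) (r : ℝ) :
    ∀ᶠ β in atTop, ∀ y, |y| ≤ r * β ^ 2 →
      d * y ^ 2 - C * r ^ 3 / β ^ 2 ≤ β ^ 16 * f (y / β ^ 8) := by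
  have hsmall : Tendsto (fun β : ℝ => r / β ^ 6) atTop (𝓝 0) :=
    tendsto_const_nhds.div_atTop (tendsto_pow_atTop (by norm_num))
  filter_upwards [eventually_gt_atTop 0, hsmall.eventually_lt_const hs₀] with β hβ hβs y hy
  have habs : |y / β ^ 8| ≤ r / β ^ 6 := by
    calc |y / β ^ 8| = |y| / β ^ 8 := by rw [abs_div, abs_of_pos (pow_pos hβ 8)]
      _ ≤ r * β ^ 2 / β ^ 8 := by gcongr
      _ = r / β ^ 6 := by field_simp
  calc d * y ^ 2 - C * r ^ 3 / β ^ 2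
      = β ^ 16 * (d * (y / β ^ 8) ^ 2 - C * (r / β ^ 6) ^ 3) := by field_simp
    _ ≤ β ^ 16 * (d * (y / β ^ 8) ^ 2 - C * |y / β ^ 8| ^ 3) := by gcongr
    _ ≤ β ^ 16 * f (y / β ^ 8) := by gcongr; exact hf _ (habs.trans_lt hβs)

lemma eventually_le_rescaling {k r : ℝ} (hk : 0 < k) (hr : 0 < r)
    (hf : ∀ s, 0 ≤ s → k * min (s ^ 2) 1 ≤ f s) (M : ℝ) :
    ∀ᶠ β in atTop, ∀ y, r * β ^ 2 ≤ y → M ≤ β ^ 16 * f (y / β ^ 8) := by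
  have hquartic := (tendsto_pow_atTop four_ne_zero).const_mul_atTop
    (show 0 < k * r ^ 2 by positivity)
  have hsixteenth := (tendsto_pow_atTop (n := 16) (by norm_num)).const_mul_atTop hk
  filter_upwards [eventually_gt_atTop 0, hquartic.eventually_ge_atTop M,
    hsixteenth.eventually_ge_atTop M] with β hβ hβ₄ hβ₁₆ y hy
  have hy0 : 0 ≤ y := le_trans (by positivity) hy
  calc M ≤ min (k * (r * β ^ 2) ^ 2) (k * β ^ 16) := le_min (by linarith) hβ₁₆
    _ ≤ min (k * y ^ 2) (k * β ^ 16) := by gcongr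
    _ = β ^ 16 * (k * min ((y / β ^ 8) ^ 2) 1) := by
        rw [mul_left_comm, mul_min_of_nonneg _ _ (by positivity), mul_min_of_nonneg _ _ hk.le,
          mul_one]
        field_simp
    _ ≤ β ^ 16 * f (y / β ^ 8) := by gcongr; exact hf _ (by positivity)

end Rescaling

/-- The excess of the de Gennes energy at `ξ₀ + s` over `Θ₀`, truncated at `1` so that the effective
potential is bounded. -/
def deGennesGap (ξ₀ s : ℝ) : ℝ := min (deGennes (ξ₀ + s) - Theta0) 1

/-- The effective potential in the variable `ρ` left after minimizing over `τ`, in units of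
`B ^ (-1/3) = β ^ (-16)`, at the rescaled momentum `ζ`. -/
def effectivePotential (ξ₀ ζ β ρ : ℝ) : ℝ := β ^ 16 * deGennesGap ξ₀ ((ζ + ρ ^ 2 / 2) / β ^ 8)

lemma continuous_deGennesGap (ξ₀ : ℝ) : Continuous (deGennesGap ξ₀) :=
  ((continuous_deGennes.comp (continuous_const.add continuous_id)).sub continuous_const).min
    continuous_const

lemma deGennesGap_nonneg (ξ₀ s : ℝ) : 0 ≤ deGennesGap ξ₀ s :=
  le_min (sub_nonneg.2 (Theta0_le _)) zero_le_one

lemma continuous_effectivePotential (ξ₀ ζ β : ℝ) : Continuous (effectivePotential ξ₀ ζ β) :=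
  continuous_const.mul ((continuous_deGennesGap ξ₀).comp (by fun_prop))

lemma effectivePotential_nonneg (ξ₀ ζ β ρ : ℝ) : 0 ≤ effectivePotential ξ₀ ζ β ρ :=
  mul_nonneg (by positivity) (deGennesGap_nonneg _ _)

lemma abs_effectivePotential_le (ξ₀ ζ β ρ : ℝ) : |effectivePotential ξ₀ ζ β ρ| ≤ β ^ 16 := by
  rw [abs_of_nonneg (effectivePotential_nonneg _ _ _ _)]
  exact mul_le_of_le_one_right (by positivity) (min_le_right _ _)

section UniqueMinimum

variable {ξ₀ : ℝ} (hmin : deGennes ξ₀ = Theta0) (huniq : ∀ ξ, deGennes ξ = Theta0 → ξ = ξ₀)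

include hmin huniq

lemma exists_cubic_le_deGennesGap (hpos : 0 < 1 / 2 * iteratedDeriv 2 deGennes ξ₀) :
    ∃ C > 0, ∃ s₀ > 0, ∀ s, |s| < s₀ →
      1 / 2 * iteratedDeriv 2 deGennes ξ₀ * s ^ 2 - C * |s| ^ 3 ≤ deGennesGap ξ₀ s := by
  obtain ⟨C, hC, s₀, hs₀, hcubic⟩ := exists_deGennes_cubic_lower_bound hmin huniq hpos
  set d := 1 / 2 * iteratedDeriv 2 deGennes ξ₀
  refine ⟨C, hC, min s₀ √(1 / d), by positivity, fun s hs => ?_⟩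
  obtain ⟨hs₀', hsd⟩ := lt_min_iff.1 hs
  refine le_min (by linarith [hcubic s hs₀']) ((sub_le_self _ (by positivity)).trans ?_)
  rw [← le_div_iff₀' hpos, ← sq_abs]
  exact ((lt_sqrt (abs_nonneg s)).1 hsd).le

lemma exists_mul_min_le_deGennesGap (hpos : 0 < 1 / 2 * iteratedDeriv 2 deGennes ξ₀) :
    ∃ k > 0, ∀ s, 0 ≤ s → k * min (s ^ 2) 1 ≤ deGennesGap ξ₀ s := by
  obtain ⟨C, hC, s₀, hs₀, hcubic⟩ := exists_cubic_le_deGennesGap hmin huniq hpos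
  set d := 1 / 2 * iteratedDeriv 2 deGennes ξ₀
  set s₁ := min (s₀ / 2) (d / (2 * C))
  have hs₁ : 0 < s₁ := by positivity
  obtain ⟨c, hc, hfar⟩ := exists_add_le_deGennes huniq (lt_add_of_pos_right ξ₀ hs₁)
  refine ⟨min (d / 2) (min c 1), by positivity, fun s hs => ?_⟩
  rcases le_total s s₁ with hnear | hs₁s
  · obtain ⟨hs₀', hsC⟩ := le_min_iff.1 hnear
    have hcub := hcubic s (by rw [abs_of_nonneg hs]; linarith)
    rw [abs_of_nonneg hs] at hcub
    rw [le_div_iff₀ (by positivity)] at hsC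
    calc min (d / 2) (min c 1) * min (s ^ 2) 1 ≤ d / 2 * s ^ 2 := by
          gcongr <;> exact min_le_left _ _
      _ ≤ d * s ^ 2 - C * s ^ 3 := by
          linarith [mul_le_mul_of_nonneg_right hsC (sq_nonneg s)]
      _ ≤ deGennesGap ξ₀ s := hcub
  · calc min (d / 2) (min c 1) * min (s ^ 2) 1 ≤ min c 1 * 1 :=
          mul_le_mul (min_le_right _ _) (min_le_right _ _) (by positivity) (by positivity)
      _ ≤ deGennesGap ξ₀ s := by
          rw [mul_one]
          exact min_le_min_right _ (by linarith [hfar (ξ₀ + s) (by linarith)])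

lemma exists_isSchrodingerLowerBound_effectivePotential_of_pos
    (hpos : 0 < 1 / 2 * iteratedDeriv 2 deGennes ξ₀) (C₁ : ℝ) :
    ∃ C₀ > 0, ∀ᶠ β in atTop, ∀ ζ, |ζ| ≤ C₁ →
      IsSchrodingerLowerBound (effectivePotential ξ₀ ζ β)
        (montgomeryMod (1 / 2 * iteratedDeriv 2 deGennes ξ₀) ζ - C₀ / β ^ 2) := by
  obtain ⟨C, hC, s₀, hs₀, hcubic⟩ := exists_cubic_le_deGennesGap hmin huniq hpos
  obtain ⟨k, hk, hgrowth⟩ := exists_mul_min_le_deGennesGap hmin huniq hpos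
  set δ := 1 / 2 * iteratedDeriv 2 deGennes ξ₀
  obtain ⟨M, hM⟩ := exists_montgomeryMod_le hpos.le C₁
  obtain ⟨L, hL, hlocal⟩ := exists_isSchrodingerLowerBound_of_localized
  refine ⟨C * 3 ^ 3 + L, by positivity, ?_⟩
  filter_upwards [eventually_gt_atTop (0 : ℝ),
    (tendsto_pow_atTop two_ne_zero).eventually_ge_atTop (4 * C₁),
    eventually_sub_le_rescaling hs₀ hC.le hcubic 3,
    eventually_le_rescaling hk (r := 1 / 4) (by norm_num) hgrowth M] with β hβ hβC hnear hfar ζ hζ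
  obtain ⟨hζl, hζr⟩ := abs_le.1 hζ
  have hβ2 : 0 < β ^ 2 := by positivity
  have hloc := hlocal hβ (by fun_prop)
    ((isSchrodingerLowerBound_montgomeryMod hpos.le ζ).sub_const (C * 3 ^ 3 / β ^ 2))
    (V := effectivePotential ξ₀ ζ β)
    (fun ρ hρ => hnear _ <| by
      have := sq_le_sq.2 (hρ.trans (le_abs_self _))
      rw [abs_le]
      constructor <;> linarith [sq_nonneg ρ])
    (fun ρ hρ => (sub_le_self _ (by positivity)).trans <| (hM ζ hζ).trans <| hfar _ <| by
      have := sq_le_sq.2 ((abs_of_pos hβ).le.trans hρ)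
      linarith)
  rwa [sub_sub, ← add_div] at hloc

theorem exists_isSchrodingerLowerBound_effectivePotential (C₁ : ℝ) :
    ∃ C₀ > 0, ∀ᶠ β in atTop, ∀ ζ, |ζ| ≤ C₁ →
      IsSchrodingerLowerBound (effectivePotential ξ₀ ζ β)
        (montgomeryMod (1 / 2 * iteratedDeriv 2 deGennes ξ₀) ζ - C₀ / β ^ 2) := by
  rcases le_or_gt (1 / 2 * iteratedDeriv 2 deGennes ξ₀) 0 with hnonpos | hpos
  · refine ⟨1, one_pos, Eventually.of_forall fun β ζ _ => ?_⟩
    exact .of_nonpos (effectivePotential_nonneg ξ₀ ζ β)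
      ((sub_le_self _ (by positivity)).trans (montgomeryMod_nonpos hnonpos ζ))
  · exact exists_isSchrodingerLowerBound_effectivePotential_of_pos hmin huniq hpos C₁

end UniqueMinimum

end EffectivePotential

section Scaling

variable {B : ℝ}

lemma rpow_one_div_pow_eq (hB : 0 ≤ B) (n : ℕ) :
    (B ^ ((1 : ℝ) / 48)) ^ n = B ^ ((n : ℝ) / 48) := by
  rw [← rpow_mul_natCast hB, one_div_mul_eq_div]

lemma Theta0_add_effectivePotential_le (hB : 0 < B) (m : ℤ) (ξ₀ ρ : ℝ) :
    Theta0 + B ^ (-(1 : ℝ) / 3) *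
        effectivePotential ξ₀ (delta1 B m ξ₀) (B ^ ((1 : ℝ) / 48)) ρ ≤
      deGennes (((m : ℝ) - B / 2) / √B + B ^ (-(1 : ℝ) / 6) * ρ ^ 2 / 2) := by
  have hunit : B ^ (-(1 : ℝ) / 3) * (B ^ ((1 : ℝ) / 48)) ^ 16 = 1 := by
    rw [rpow_one_div_pow_eq hB.le, ← rpow_add hB]
    norm_num
  have hinv : B ^ (-(1 : ℝ) / 6) * B ^ ((1 : ℝ) / 6) = 1 := by
    rw [← rpow_add hB]
    norm_num
  have hmomentum : ξ₀ + (delta1 B m ξ₀ + ρ ^ 2 / 2) / (B ^ ((1 : ℝ) / 48)) ^ 8 =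
      ((m : ℝ) - B / 2) / √B + B ^ (-(1 : ℝ) / 6) * ρ ^ 2 / 2 := by
    have h8 : (B ^ ((1 : ℝ) / 48)) ^ 8 = B ^ ((1 : ℝ) / 6) := by
      rw [rpow_one_div_pow_eq hB.le]
      norm_num
    rw [h8, div_eq_mul_inv, ← eq_inv_of_mul_eq_one_left hinv, delta1]
    linear_combination (((m : ℝ) - B / 2) / √B - ξ₀) * hinv
  rw [effectivePotential, ← mul_assoc, hunit, one_mul, deGennesGap, hmomentum]
  exact le_sub_iff_add_le'.1 (min_le_left _ _)

lemma rpow_mul_sub_div_eq (hB : 0 < B) (E C : ℝ) :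
    B ^ (-(1 : ℝ) / 3) * (E - C / (B ^ ((1 : ℝ) / 48)) ^ 2) =
      E * B ^ (-(1 : ℝ) / 3) - C * B ^ (-(3 : ℝ) / 8) := by
  have hsplit : B ^ (-(1 : ℝ) / 3) = B ^ (-(3 : ℝ) / 8) * (B ^ ((1 : ℝ) / 48)) ^ 2 := by
    rw [rpow_one_div_pow_eq hB.le, ← rpow_add hB]
    norm_num
  have : (B ^ ((1 : ℝ) / 48)) ^ 2 ≠ 0 := by positivity
  rw [hsplit]
  field_simp

end Scaling

/-- Proposition 4.1 (A): refined lower bound for `q_m` in terms of the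
modified Montgomery energy. -/
theorem statement10
    (ξ₀ : ℝ) (hξ₀ : deGennes ξ₀ = Theta0)
    (hξ₀uniq : ∀ ξ : ℝ, deGennes ξ = Theta0 → ξ = ξ₀)
    (δ₀ : ℝ) (hδ₀ : δ₀ = (1 / 2) * iteratedDeriv 2 deGennes ξ₀)
    (C₁ : ℝ) (hC₁ : 0 < C₁) :
    ∃ B₀ C₀ : ℝ, 0 < B₀ ∧ 0 < C₀ ∧
      ∀ (m : ℤ) (B : ℝ), B₀ < B → |delta1 B m ξ₀| < C₁ →
        ∀ ψ : ℝ × ℝ → ℂ, InFormDomain B m ψ →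
          (Theta0 + montgomeryMod δ₀ (delta1 B m ξ₀) * B ^ (-(1:ℝ)/3)
              - C₀ * B ^ (-(3:ℝ)/8)) * (∫ p in halfPlane, ‖ψ p‖ ^ 2)
            ≤ qForm B m ψ := by
  subst hδ₀
  obtain ⟨C₀, hC₀, hβ⟩ := exists_isSchrodingerLowerBound_effectivePotential hξ₀ hξ₀uniq C₁
  obtain ⟨B₀, hB₀⟩ := eventually_atTop.1 <|
    (tendsto_rpow_atTop (by norm_num : (0 : ℝ) < 1 / 48)).eventually hβ
  refine ⟨max B₀ 1, C₀, by positivity, hC₀, fun m B hB hδ₁ ψ hψ => ?_⟩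
  obtain ⟨hBB₀, hB1⟩ := max_lt_iff.1 hB
  have hBpos : 0 < B := one_pos.trans hB1
  have hlower := hψ.mul_setIntegral_le_qForm hBpos (continuous_effectivePotential ξ₀ _ _)
    (abs_effectivePotential_le ξ₀ _ _) (hB₀ B hBB₀.le _ hδ₁.le)
    (Theta0_add_effectivePotential_le hBpos m ξ₀)
  rwa [rpow_mul_sub_div_eq hBpos, ← add_sub_assoc] at hlower
end
end

section
/- Let α < β be real numbers, p ∈ C¹([α,β];ℝ), λ ∈ ℝ, and let u ∈ C²([α,β];ℝ) satisfy −u″(x) + p(x)·u(x) = λ·u(x) for all x ∈ [α,β]. Then for every polynomial b with real coefficients: ∫_α^β (b‴ + 4(λ−p)·b′ − 2p′·b)·u² dx = F(β) − F(α), where F(x) = 2b(x)·u′(x)² + b″(x)·u(x)² − 2b′(x)·u(x)·u′(x) + 2(λ−p(x))·b(x)·u(x)². -/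
noncomputable section
open MeasureTheory Real Set Polynomial

/-- The boundary bracket term of the moment formula of Lemma A.1. -/
def bracketTerm (p u : ℝ → ℝ) (lam α β : ℝ) (b : Polynomial ℝ) (x : ℝ) : ℝ :=
  2 * b.eval x * (derivWithin u (Icc α β) x) ^ 2
    + (Polynomial.derivative (Polynomial.derivative b)).eval x * u x ^ 2
    - 2 * (Polynomial.derivative b).eval x * u x * derivWithin u (Icc α β) x
    + 2 * (lam - p x) * b.eval x * u x ^ 2

/-!
If `u'' = q u`, then `w = u ^ 2` satisfies Appell's equation `w''' = 4 q w' + 2 q' w`, that is,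
`L w = 0` for `L y = y''' - 4 q y' - 2 q' y`. The operator `L` is formally skew-adjoint, so for
every weight `b` the function `(L b) w + b (L w)` is the derivative of a bilinear concomitant of
`b` and `w`. With `q = p - λ` and `L w = 0`, integrating `(L b) u ^ 2` leaves only the boundary
values of this concomitant, which is the bracket `F`.
-/

open scoped Interval

section Appell

/-- The value at a point of Appell's operator `L y = y''' - 4 q y' - 2 q' y`, which annihilates the
squares of the solutions of `u'' = q u`. The arguments `y₁` and `y₃` stand for `y'` and `y'''`. -/
def appellOperator {R : Type*} [CommRing R] (q q' y y₁ y₃ : R) : R :=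
  y₃ - 4 * q * y₁ - 2 * q' * y

/-- The value at a point of the bilinear concomitant of Appell's operator, whose derivative is
`(L b) w + b (L w)`. The subscripts of `b` and `w` count derivatives. -/
def appellConcomitant {R : Type*} [CommRing R] (q b b₁ b₂ w w₁ w₂ : R) : R :=
  b₂ * w - b₁ * w₁ + b * w₂ - 4 * q * b * w

theorem appellOperator_sq_eq_zero {R : Type*} [CommRing R] (q q' u u' : R) :
    appellOperator q q' (u ^ 2) (2 * u * u') (4 * q * (2 * u * u') + 2 * q' * u ^ 2) = 0 := by
  simp only [appellOperator]
  ring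

variable {𝕜 A : Type*} [NontriviallyNormedField 𝕜] [NormedCommRing A] [NormedAlgebra 𝕜 A]
  {s : Set 𝕜} {x : 𝕜} {q : 𝕜 → A} {q' : A}

theorem hasDerivWithinAt_appellConcomitant {b b₁ b₂ w w₁ w₂ : 𝕜 → A} {b₃ w₃ : A}
    (hq : HasDerivWithinAt q q' s x)
    (hb : HasDerivWithinAt b (b₁ x) s x) (hb₁ : HasDerivWithinAt b₁ (b₂ x) s x)
    (hb₂ : HasDerivWithinAt b₂ b₃ s x)
    (hw : HasDerivWithinAt w (w₁ x) s x) (hw₁ : HasDerivWithinAt w₁ (w₂ x) s x)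
    (hw₂ : HasDerivWithinAt w₂ w₃ s x) :
    HasDerivWithinAt
      (fun t => appellConcomitant (q t) (b t) (b₁ t) (b₂ t) (w t) (w₁ t) (w₂ t))
      (appellOperator (q x) q' (b x) (b₁ x) b₃ * w x
        + b x * appellOperator (q x) q' (w x) (w₁ x) w₃) s x := by
  refine ((((hb₂.fun_mul hw).fun_sub (hb₁.fun_mul hw₁)).fun_add (hb.fun_mul hw₂)).fun_sub
    (((hq.const_mul 4).fun_mul hb).fun_mul hw)).congr_deriv ?_
  simp only [appellOperator]
  ring

variable {u u' : 𝕜 → A}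

theorem hasDerivWithinAt_two_mul_mul_of_ode (hu : HasDerivWithinAt u (u' x) s x)
    (hu' : HasDerivWithinAt u' (q x * u x) s x) :
    HasDerivWithinAt (fun t => 2 * u t * u' t) (2 * (u' x ^ 2 + q x * u x ^ 2)) s x := by
  refine ((hu.const_mul 2).fun_mul hu').congr_deriv ?_
  ring

theorem hasDerivWithinAt_two_mul_sq_add_of_ode (hq : HasDerivWithinAt q q' s x)
    (hu : HasDerivWithinAt u (u' x) s x) (hu' : HasDerivWithinAt u' (q x * u x) s x) :
    HasDerivWithinAt (fun t => 2 * (u' t ^ 2 + q t * u t ^ 2))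
      (4 * q x * (2 * u x * u' x) + 2 * q' * u x ^ 2) s x := by
  refine (((hu'.fun_pow 2).fun_add (hq.fun_mul (hu.fun_pow 2))).const_mul 2).congr_deriv ?_
  push_cast
  ring

theorem hasDerivWithinAt_appellConcomitant_sq {b b₁ b₂ : 𝕜 → A} {b₃ : A}
    (hq : HasDerivWithinAt q q' s x)
    (hb : HasDerivWithinAt b (b₁ x) s x) (hb₁ : HasDerivWithinAt b₁ (b₂ x) s x)
    (hb₂ : HasDerivWithinAt b₂ b₃ s x)
    (hu : HasDerivWithinAt u (u' x) s x) (hu' : HasDerivWithinAt u' (q x * u x) s x) :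
    HasDerivWithinAt
      (fun t => appellConcomitant (q t) (b t) (b₁ t) (b₂ t)
        (u t ^ 2) (2 * u t * u' t) (2 * (u' t ^ 2 + q t * u t ^ 2)))
      (appellOperator (q x) q' (b x) (b₁ x) b₃ * u x ^ 2) s x := by
  have hw : HasDerivWithinAt (fun t => u t ^ 2) (2 * u x * u' x) s x := by
    simpa using hu.fun_pow 2
  refine (hasDerivWithinAt_appellConcomitant hq hb hb₁ hb₂ hw
    (hasDerivWithinAt_two_mul_mul_of_ode hu hu')
    (hasDerivWithinAt_two_mul_sq_add_of_ode hq hu hu')).congr_deriv ?_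
  rw [appellOperator_sq_eq_zero, mul_zero, add_zero]

end Appell

theorem integral_eq_sub_of_hasDerivWithinAt_uIcc {E : Type*} [NormedAddCommGroup E]
    [NormedSpace ℝ E] [CompleteSpace E] {f f' : ℝ → E} {α β : ℝ}
    (hf : ∀ x ∈ [[α, β]], HasDerivWithinAt f (f' x) [[α, β]] x)
    (hf' : IntervalIntegrable f' volume α β) :
    ∫ x in α..β, f' x = f β - f α :=
  intervalIntegral.integral_eq_sub_of_hasDeriv_right (HasDerivWithinAt.continuousOn hf)
    (fun x hx => ((hf x (Ioo_subset_Icc_self hx)).hasDerivAt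
      (Icc_mem_nhds hx.1 hx.2)).hasDerivWithinAt) hf'

theorem statement16_general {A : Type*} [NormedCommRing A] [NormedAlgebra ℝ A] [CompleteSpace A]
    {α β : ℝ} {p p' u u' b b₁ b₂ b₃ : ℝ → A} {lam : A}
    (hp : ∀ x ∈ [[α, β]], HasDerivWithinAt p (p' x) [[α, β]] x)
    (hp' : IntervalIntegrable p' volume α β)
    (hu : ∀ x ∈ [[α, β]], HasDerivWithinAt u (u' x) [[α, β]] x)
    (hu' : ∀ x ∈ [[α, β]], HasDerivWithinAt u' ((p x - lam) * u x) [[α, β]] x)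
    (hb : ∀ x ∈ [[α, β]], HasDerivWithinAt b (b₁ x) [[α, β]] x)
    (hb₁ : ∀ x ∈ [[α, β]], HasDerivWithinAt b₁ (b₂ x) [[α, β]] x)
    (hb₂ : ∀ x ∈ [[α, β]], HasDerivWithinAt b₂ (b₃ x) [[α, β]] x)
    (hb₃ : IntervalIntegrable b₃ volume α β) :
    let F : ℝ → A := fun x => 2 * b x * u' x ^ 2 + b₂ x * u x ^ 2 - 2 * b₁ x * u x * u' x
      + 2 * (lam - p x) * b x * u x ^ 2
    ∫ x in α..β, (b₃ x + 4 * (lam - p x) * b₁ x - 2 * p' x * b x) * u x ^ 2 = F β - F α := by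
  intro F
  have hF_eq : F = fun t => appellConcomitant (p t - lam) (b t) (b₁ t) (b₂ t)
      (u t ^ 2) (2 * u t * u' t) (2 * (u' t ^ 2 + (p t - lam) * u t ^ 2)) := by
    funext t
    simp only [F, appellConcomitant]
    ring
  have hF : ∀ x ∈ [[α, β]], HasDerivWithinAt F
      ((b₃ x + 4 * (lam - p x) * b₁ x - 2 * p' x * b x) * u x ^ 2) [[α, β]] x := by
    intro x hx
    rw [hF_eq]
    refine (hasDerivWithinAt_appellConcomitant_sq ((hp x hx).sub_const lam) (hb x hx) (hb₁ x hx)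
      (hb₂ x hx) (hu x hx) (hu' x hx)).congr_deriv ?_
    simp only [appellOperator]
    ring
  have hF' : IntervalIntegrable
      (fun x => (b₃ x + 4 * (lam - p x) * b₁ x - 2 * p' x * b x) * u x ^ 2) volume α β := by
    have hpb₁ : ContinuousOn (fun x => 4 * (lam - p x) * b₁ x) [[α, β]] :=
      (continuousOn_const.mul (continuousOn_const.sub (HasDerivWithinAt.continuousOn hp))).mul
        (HasDerivWithinAt.continuousOn hb₁)
    exact ((hb₃.add hpb₁.intervalIntegrable).sub
      ((hp'.const_mul 2).mul_continuousOn (HasDerivWithinAt.continuousOn hb))).mul_continuousOn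
        ((HasDerivWithinAt.continuousOn hu).pow 2)
  exact integral_eq_sub_of_hasDerivWithinAt_uIcc hF hF'

/-- Lemma A.1, compact interval case: moment formula for solutions of
`-u'' + p u = λ u` on `[α, β]`. -/
theorem statement16 (α β : ℝ) (hαβ : α < β) (p u : ℝ → ℝ) (lam : ℝ)
    (hp : ContDiffOn ℝ 1 p (Icc α β)) (hu : ContDiffOn ℝ 2 u (Icc α β))
    (heq : ∀ x ∈ Icc α β,
      -(derivWithin (derivWithin u (Icc α β)) (Icc α β) x) + p x * u x = lam * u x)
    (b : Polynomial ℝ) :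
    ∫ x in α..β,
        ((Polynomial.derivative (Polynomial.derivative (Polynomial.derivative b))).eval x
          + 4 * (lam - p x) * (Polynomial.derivative b).eval x
          - 2 * derivWithin p (Icc α β) x * b.eval x) * u x ^ 2
      = bracketTerm p u lam α β b β - bracketTerm p u lam α β b α := by
  have hu₁ : ContDiffOn ℝ 1 (derivWithin u (Icc α β)) (Icc α β) :=
    hu.derivWithin (uniqueDiffOn_Icc hαβ) (by norm_num)
  have hp' : ContinuousOn (derivWithin p (Icc α β)) (Icc α β) :=
    hp.continuousOn_derivWithin (uniqueDiffOn_Icc hαβ) le_rfl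
  have hode : ∀ x ∈ Icc α β,
      derivWithin (derivWithin u (Icc α β)) (Icc α β) x = (p x - lam) * u x :=
    fun x hx => by linear_combination -heq x hx
  unfold bracketTerm
  rw [← uIcc_of_le hαβ.le] at *
  exact statement16_general
    (fun x hx => (hp.differentiableOn one_ne_zero x hx).hasDerivWithinAt) hp'.intervalIntegrable
    (fun x hx => (hu.differentiableOn two_ne_zero x hx).hasDerivWithinAt)
    (fun x hx => hode x hx ▸ (hu₁.differentiableOn one_ne_zero x hx).hasDerivWithinAt)
    (fun x _ => b.hasDerivWithinAt x _) (fun x _ => (derivative b).hasDerivWithinAt x _)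
    (fun x _ => (derivative (derivative b)).hasDerivWithinAt x _)
    ((derivative (derivative (derivative b))).continuous.intervalIntegrable α β)
end
end

section
/- Let p be a polynomial with real coefficients such that p(x) → +∞ as |x| → ∞, let λ ∈ ℝ, and let u ∈ C²(ℝ;ℝ) ∩ L²(ℝ) satisfy −u″(x) + p(x)·u(x) = λ·u(x) for all x ∈ ℝ. Then for every polynomial b with real coefficients, the function (b‴ + 4(λ−p)·b′ − 2p′·b)·u² is integrable on ℝ and ∫_ℝ (b‴ + 4(λ−p)·b′ − 2p′·b)·u² dx = 0. -/
/-! Put `q = p - λ`, so that `u'' = q u` with `q ≥ κ² > 0` near `±∞`. There `g = u u'` satisfies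
`g' = u'² + q u² ≥ E`, where `E = u'² + κ² u² ≥ 2κ |g|`. In particular `u²` is convex near `+∞`,
and being integrable it must decrease, that is, `g ≤ 0`. Then `g' ≥ -2κ g` makes `e^{2κx} g`
increasing, so `-g = O(e^{-2κx})`; moreover `E` is decreasing, since `E' = 2 (q + κ²) g`, so
integrating `E ≤ g'` over `[x - 1, x]` gives `E x ≤ -g (x - 1)`. Hence `u²`, `u u'` and `u'²` decay
exponentially at `±∞`. The integrand of the moment formula is the derivative of
`(b'' - 2 q b) u² + 2 b u'² - 2 b' u u'`, which therefore vanishes at `±∞`. -/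

noncomputable section
open MeasureTheory Real Set Filter Polynomial

open Asymptotics Function
open scoped Topology

lemma mul_sub_le_sub_of_hasDerivAt_of_le {D : Set ℝ} (hD : Convex ℝ D) {f f' : ℝ → ℝ} {c : ℝ}
    (hf : ∀ x ∈ D, HasDerivAt f (f' x) x) (hc : ∀ x ∈ D, c ≤ f' x) {x y : ℝ}
    (hx : x ∈ D) (hy : y ∈ D) (hxy : x ≤ y) : c * (y - x) ≤ f y - f x := by
  refine hD.mul_sub_le_image_sub_of_le_deriv
    (fun z hz ↦ (hf z hz).continuousAt.continuousWithinAt)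
    (fun z hz ↦ (hf z (interior_subset hz)).differentiableAt.differentiableWithinAt)
    (fun z hz ↦ ?_) x hx y hy hxy
  rw [(hf z (interior_subset hz)).deriv]
  exact hc z (interior_subset hz)

lemma monotoneOn_of_hasDerivAt_nonneg {D : Set ℝ} (hD : Convex ℝ D) {f f' : ℝ → ℝ}
    (hf : ∀ x ∈ D, HasDerivAt f (f' x) x) (hf' : ∀ x ∈ D, 0 ≤ f' x) : MonotoneOn f D :=
  fun x hx y hy hxy ↦ by
    have := mul_sub_le_sub_of_hasDerivAt_of_le hD hf hf' hx hy hxy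
    linarith

lemma not_integrableOn_Ioi_of_tendsto_atTop {f : ℝ → ℝ} (hf : Tendsto f atTop atTop) (R : ℝ) :
    ¬ IntegrableOn f (Ioi R) := by
  intro hint
  obtain ⟨T, hT⟩ := eventually_atTop.1 (hf.eventually_ge_atTop 1)
  have hsub : Ioi (max T R) ⊆ {x | 1 ≤ f x} ∩ Ioi R := fun x hx ↦
    ⟨hT x ((le_max_left T R).trans (le_of_lt hx)), (le_max_right T R).trans_lt hx⟩
  have hfin : volume (Ioi (max T R)) < ⊤ := calc
    volume (Ioi (max T R)) ≤ volume ({x | 1 ≤ f x} ∩ Ioi R) := measure_mono hsub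
    _ ≤ volume.restrict (Ioi R) {x | 1 ≤ f x} := Measure.le_restrict_apply _ _
    _ < ⊤ := hint.measure_ge_lt_top one_pos
  exact hfin.ne Real.volume_Ioi

lemma deriv_nonpos_of_monotoneOn_of_integrableOn {f f' : ℝ → ℝ} {R : ℝ}
    (hf : ∀ x ∈ Ici R, HasDerivAt f (f' x) x) (hmono : MonotoneOn f' (Ici R))
    (hint : IntegrableOn f (Ioi R)) {x : ℝ} (hx : x ∈ Ici R) : f' x ≤ 0 := by
  by_contra! hpos
  have hsub : Ici x ⊆ Ici R := Ici_subset_Ici.2 hx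
  have hline : ∀ y ∈ Ici x, f' x * (y - x) + f x ≤ f y := fun y hy ↦ by
    have := mul_sub_le_sub_of_hasDerivAt_of_le (convex_Ici x) (fun z hz ↦ hf z (hsub hz))
      (fun z hz ↦ hmono hx (hsub hz) hz) self_mem_Ici hy hy
    linarith
  have hline_tendsto : Tendsto (fun y ↦ f' x * (y - x) + f x) atTop atTop :=
    tendsto_atTop_add_const_right _ _
      ((tendsto_atTop_add_const_right _ (-x) tendsto_id).const_mul_atTop hpos)
  exact not_integrableOn_Ioi_of_tendsto_atTop
    (tendsto_atTop_mono' _ (eventually_atTop.2 ⟨x, hline⟩) hline_tendsto) R hint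

lemma mul_exp_le_of_neg_mul_le_deriv {g g' : ℝ → ℝ} {c R : ℝ}
    (hg : ∀ x ∈ Ici R, HasDerivAt g (g' x) x) (hg' : ∀ x ∈ Ici R, -(c * g x) ≤ g' x)
    {x : ℝ} (hx : x ∈ Ici R) : g R * exp (c * R) * exp (-c * x) ≤ g x := by
  have hderiv : ∀ y ∈ Ici R,
      HasDerivAt (fun y ↦ g y * exp (c * y)) ((g' y + c * g y) * exp (c * y)) y := fun y hy ↦
    ((hg y hy).mul ((hasDerivAt_id y).const_mul c).exp).congr_deriv (by simp only [id]; ring)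
  have hmono := monotoneOn_of_hasDerivAt_nonneg (convex_Ici R) hderiv fun y hy ↦
    mul_nonneg (by linarith [hg' y hy]) (exp_pos _).le
  calc g R * exp (c * R) * exp (-c * x)
      ≤ g x * exp (c * x) * exp (-c * x) :=
        mul_le_mul_of_nonneg_right (hmono self_mem_Ici hx hx) (exp_pos _).le
    _ = g x := by rw [mul_assoc, ← exp_add]; simp

/-- `v` solves `v'' = q v` on `[R, ∞)`, where `κ² ≤ q`: in quantum mechanics, a solution in a
classically forbidden region. The derivative of `v` is carried along as the function `w`. -/
structure IsForbiddenRegionSolution (κ R : ℝ) (q v w : ℝ → ℝ) : Prop where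
  hasDerivAt : ∀ x ∈ Ici R, HasDerivAt v (w x) x
  hasDerivAt_deriv : ∀ x ∈ Ici R, HasDerivAt w (q x * v x) x
  sq_le : ∀ x ∈ Ici R, κ ^ 2 ≤ q x

namespace IsForbiddenRegionSolution

variable {κ R : ℝ} {q v w : ℝ → ℝ}

lemma hasDerivAt_mul (h : IsForbiddenRegionSolution κ R q v w) :
    ∀ x ∈ Ici R, HasDerivAt (fun x ↦ v x * w x) (w x ^ 2 + q x * v x ^ 2) x := fun x hx ↦
  ((h.hasDerivAt x hx).mul (h.hasDerivAt_deriv x hx)).congr_deriv (by ring)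

lemma energy_le_deriv_mul (h : IsForbiddenRegionSolution κ R q v w) :
    ∀ x ∈ Ici R, w x ^ 2 + κ ^ 2 * v x ^ 2 ≤ w x ^ 2 + q x * v x ^ 2 := fun x hx ↦ by
  have := h.sq_le x hx
  gcongr

lemma mul_nonpos (h : IsForbiddenRegionSolution κ R q v w)
    (hint : IntegrableOn (fun x ↦ v x ^ 2) (Ioi R)) : ∀ x ∈ Ici R, v x * w x ≤ 0 := by
  have hderiv : ∀ x ∈ Ici R, HasDerivAt (fun x ↦ v x ^ 2) (2 * (v x * w x)) x := fun x hx ↦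
    ((h.hasDerivAt x hx).pow 2).congr_deriv (by push_cast; ring)
  have hmono : MonotoneOn (fun x ↦ v x * w x) (Ici R) :=
    monotoneOn_of_hasDerivAt_nonneg (convex_Ici R) h.hasDerivAt_mul fun x hx ↦
      (by positivity : 0 ≤ w x ^ 2 + κ ^ 2 * v x ^ 2).trans (h.energy_le_deriv_mul x hx)
  have hmono_two_mul : MonotoneOn (fun x ↦ 2 * (v x * w x)) (Ici R) := fun x hx y hy hxy ↦
    mul_le_mul_of_nonneg_left (hmono hx hy hxy) zero_le_two
  intro x hx
  have := deriv_nonpos_of_monotoneOn_of_integrableOn hderiv hmono_two_mul hint hx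
  linarith

lemma neg_mul_le_exp (h : IsForbiddenRegionSolution κ R q v w) :
    ∀ x ∈ Ici R, -(v x * w x) ≤ -(v R * w R) * exp (2 * κ * R) * exp (-(2 * κ) * x) := by
  have hgrowth : ∀ x ∈ Ici R, -(2 * κ * (v x * w x)) ≤ w x ^ 2 + q x * v x ^ 2 := fun x hx ↦ by
    nlinarith [h.energy_le_deriv_mul x hx, sq_nonneg (w x + κ * v x)]
  intro x hx
  linarith [mul_exp_le_of_neg_mul_le_deriv h.hasDerivAt_mul hgrowth hx]

lemma antitoneOn_energy (h : IsForbiddenRegionSolution κ R q v w)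
    (hint : IntegrableOn (fun x ↦ v x ^ 2) (Ioi R)) :
    AntitoneOn (fun x ↦ w x ^ 2 + κ ^ 2 * v x ^ 2) (Ici R) := by
  have hderiv : ∀ x ∈ Ici R, HasDerivAt (fun x ↦ -(w x ^ 2 + κ ^ 2 * v x ^ 2))
      (2 * (q x + κ ^ 2) * -(v x * w x)) x := fun x hx ↦
    (((h.hasDerivAt_deriv x hx).pow 2).add
      (((h.hasDerivAt x hx).pow 2).const_mul (κ ^ 2))).neg.congr_deriv (by push_cast; ring)
  have hnonneg : ∀ x ∈ Ici R, 0 ≤ 2 * (q x + κ ^ 2) * -(v x * w x) := fun x hx ↦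
    mul_nonneg (by linarith [h.sq_le x hx, sq_nonneg κ])
      (neg_nonneg.2 (h.mul_nonpos hint x hx))
  simpa using (monotoneOn_of_hasDerivAt_nonneg (convex_Ici R) hderiv hnonneg).neg

lemma energy_le_neg_mul_sub_one (h : IsForbiddenRegionSolution κ R q v w)
    (hint : IntegrableOn (fun x ↦ v x ^ 2) (Ioi R)) {x : ℝ} (hx : R + 1 ≤ x) :
    w x ^ 2 + κ ^ 2 * v x ^ 2 ≤ -(v (x - 1) * w (x - 1)) := by
  have hsub : ∀ y ∈ Icc (x - 1) x, y ∈ Ici R := fun y hy ↦ mem_Ici.2 (by linarith [hy.1])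
  have hxR : x ∈ Ici R := mem_Ici.2 (by linarith)
  have hgrowth := mul_sub_le_sub_of_hasDerivAt_of_le (convex_Icc (x - 1) x)
    (fun y hy ↦ h.hasDerivAt_mul y (hsub y hy))
    (fun y hy ↦ (h.antitoneOn_energy hint (hsub y hy) hxR hy.2).trans
      (h.energy_le_deriv_mul y (hsub y hy)))
    (left_mem_Icc.2 (sub_one_lt x).le) (right_mem_Icc.2 (sub_one_lt x).le) (sub_one_lt x).le
  linarith [h.mul_nonpos hint x hxR]

lemma energy_isBigO_exp (h : IsForbiddenRegionSolution κ R q v w)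
    (hint : IntegrableOn (fun x ↦ v x ^ 2) (Ioi R)) :
    (fun x ↦ w x ^ 2 + κ ^ 2 * v x ^ 2) =O[atTop] fun x ↦ exp (-(2 * κ) * x) := by
  refine .of_bound (-(v R * w R) * exp (2 * κ * R) * exp (2 * κ)) ?_
  filter_upwards [eventually_ge_atTop (R + 1)] with x hx
  rw [norm_of_nonneg (by positivity), norm_of_nonneg (exp_pos _).le, mul_assoc, ← exp_add,
    show 2 * κ + -(2 * κ) * x = -(2 * κ) * (x - 1) by ring]
  exact (h.energy_le_neg_mul_sub_one hint hx).trans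
    (h.neg_mul_le_exp (x - 1) (mem_Ici.2 (by linarith)))

end IsForbiddenRegionSolution

lemma superpolynomialDecay_of_isBigO_exp_neg {f : ℝ → ℝ} {c : ℝ} (hc : 0 < c)
    (hf : f =O[atTop] fun x ↦ exp (-c * x)) : SuperpolynomialDecay atTop norm f := by
  refine (superpolynomialDecay_iff_isBigO f tendsto_norm_atTop_atTop).2 fun z ↦ ?_
  refine (hf.trans (isLittleO_exp_neg_mul_rpow_atTop hc z).isBigO).congr' .rfl ?_
  filter_upwards [eventually_ge_atTop 0] with x hx
  rw [rpow_intCast, norm_of_nonneg hx]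

lemma superpolynomialDecay_cocompact_of_atTop {f : ℝ → ℝ} (hf : SuperpolynomialDecay atTop norm f)
    (hf_neg : SuperpolynomialDecay atTop norm fun x ↦ f (-x)) :
    SuperpolynomialDecay (cocompact ℝ) norm f := by
  intro n
  rw [cocompact_eq_atBot_atTop, tendsto_sup]
  refine ⟨?_, hf n⟩
  simpa [Function.comp_def] using (hf_neg n).comp tendsto_neg_atBot_atTop

theorem superpolynomialDecay_energy {κ : ℝ} {q v w : ℝ → ℝ} (hκ : 0 < κ)
    (hv : ∀ x, HasDerivAt v (w x) x) (hw : ∀ x, HasDerivAt w (q x * v x) x)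
    (hq : ∀ᶠ x in cocompact ℝ, κ ^ 2 ≤ q x) (hint : Integrable fun x ↦ v x ^ 2) :
    SuperpolynomialDecay (cocompact ℝ) norm fun x ↦ w x ^ 2 + κ ^ 2 * v x ^ 2 := by
  rw [cocompact_eq_atBot_atTop, eventually_sup] at hq
  obtain ⟨R, hR⟩ := eventually_atTop.1 hq.2
  obtain ⟨S, hS⟩ := eventually_atBot.1 hq.1
  have right : IsForbiddenRegionSolution κ R q v w := ⟨fun x _ ↦ hv x, fun x _ ↦ hw x, hR⟩
  have left : IsForbiddenRegionSolution κ (-S) (fun x ↦ q (-x)) (fun x ↦ v (-x))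
      (fun x ↦ -w (-x)) :=
    ⟨fun x _ ↦ ((hv (-x)).comp x (hasDerivAt_neg x)).congr_deriv (by simp),
      fun x _ ↦ ((hw (-x)).comp x (hasDerivAt_neg x)).neg.congr_deriv (by simp),
      fun x hx ↦ hS (-x) (neg_le.1 hx)⟩
  refine superpolynomialDecay_cocompact_of_atTop
    (superpolynomialDecay_of_isBigO_exp_neg (mul_pos two_pos hκ)
      (right.energy_isBigO_exp hint.integrableOn))
    (superpolynomialDecay_of_isBigO_exp_neg (mul_pos two_pos hκ) ?_)
  simpa only [neg_sq] using left.energy_isBigO_exp hint.comp_neg.integrableOn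

section EnergyDecay

variable {α : Type*} {l : Filter α} {k v w : α → ℝ} {κ : ℝ}

lemma superpolynomialDecay_sq_of_energy (hκ : κ ≠ 0)
    (energy : SuperpolynomialDecay l k fun x ↦ w x ^ 2 + κ ^ 2 * v x ^ 2) :
    SuperpolynomialDecay l k fun x ↦ v x ^ 2 := by
  refine (energy.const_mul (κ ^ 2)⁻¹).trans_abs_le fun x ↦ abs_le_abs_of_nonneg (sq_nonneg _) ?_
  rw [mul_add, inv_mul_cancel_left₀ (pow_ne_zero 2 hκ)]
  exact le_add_of_nonneg_left (by positivity)

lemma superpolynomialDecay_deriv_sq_of_energy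
    (energy : SuperpolynomialDecay l k fun x ↦ w x ^ 2 + κ ^ 2 * v x ^ 2) :
    SuperpolynomialDecay l k fun x ↦ w x ^ 2 :=
  energy.trans_abs_le fun x ↦
    abs_le_abs_of_nonneg (sq_nonneg _) (le_add_of_nonneg_right (by positivity))

lemma superpolynomialDecay_mul_of_energy (hκ : κ ≠ 0)
    (energy : SuperpolynomialDecay l k fun x ↦ w x ^ 2 + κ ^ 2 * v x ^ 2) :
    SuperpolynomialDecay l k fun x ↦ v x * w x := by
  refine ((superpolynomialDecay_sq_of_energy hκ energy).add
    (superpolynomialDecay_deriv_sq_of_energy energy)).trans_abs_le fun x ↦ ?_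
  rw [Pi.add_apply, abs_of_nonneg (add_nonneg (sq_nonneg (v x)) (sq_nonneg (w x))), abs_le]
  constructor <;> nlinarith [sq_nonneg (v x + w x), sq_nonneg (v x - w x)]

end EnergyDecay

lemma hasTemperateGrowth_eval (P : ℝ[X]) : HasTemperateGrowth fun x ↦ P.eval x := by
  induction P using Polynomial.induction_on' with
  | add P Q hP hQ => simpa only [eval_add] using hP.fun_add hQ
  | monomial n a => simp only [eval_monomial]; fun_prop

lemma deriv_polynomial_eval {𝕜 : Type*} [NontriviallyNormedField 𝕜] (P : 𝕜[X]) :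
    (deriv fun x ↦ P.eval x) = fun x ↦ (derivative P).eval x :=
  funext fun _ ↦ P.deriv

lemma hasTemperateGrowth_deriv {F : Type*} [NormedAddCommGroup F] [NormedSpace ℝ F] {f : ℝ → F}
    (hf : f.HasTemperateGrowth) : (deriv f).HasTemperateGrowth := by
  refine ⟨(contDiff_infty_iff_deriv.1 hf.1).2, fun n ↦ ?_⟩
  simpa only [norm_iteratedFDeriv_eq_norm_iteratedDeriv, iteratedDeriv_succ'] using hf.2 (n + 1)

section TemperateGrowth

variable {E : Type*} [NormedAddCommGroup E] [NormedSpace ℝ E] {T f : E → ℝ}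

lemma hasTemperateGrowth_mul_superpolynomialDecay {l : Filter E} (hT : T.HasTemperateGrowth)
    (hf : SuperpolynomialDecay l norm f) : SuperpolynomialDecay l norm fun x ↦ T x * f x := by
  obtain ⟨k, c, hc⟩ := hT.2 0
  refine (hf.polynomial_mul (C c * (1 + X) ^ k)).trans_abs_le fun x ↦ ?_
  have hTx : |T x| ≤ |(C c * (1 + X) ^ k : ℝ[X]).eval ‖x‖| := by
    simpa only [norm_iteratedFDeriv_zero, norm_eq_abs, eval_mul, eval_C, eval_pow, eval_add,
      eval_one, eval_X] using (hc x).trans (le_abs_self _)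
  simpa only [abs_mul] using mul_le_mul_of_nonneg_right hTx (abs_nonneg (f x))

lemma integrable_of_superpolynomialDecay [FiniteDimensional ℝ E] [MeasurableSpace E]
    [BorelSpace E] {μ : Measure E} [μ.IsAddHaarMeasure] (hcont : Continuous f)
    (hf : SuperpolynomialDecay (cocompact E) norm f) : Integrable f μ := by
  set r : ℕ := Module.finrank ℝ E + 1
  have heval (x : E) : ((1 + X) ^ r : ℝ[X]).eval ‖x‖ = (1 + ‖x‖) ^ r := by simp
  have hlim : Tendsto (fun x ↦ (1 + ‖x‖) ^ r * f x) (cocompact E) (𝓝 0) :=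
    (hf.polynomial_mul ((1 + X) ^ r) 0).congr fun x ↦ by
      rw [pow_zero, one_mul]; exact congrArg (· * f x) (heval x)
  have hO : f =O[cocompact E] fun x ↦ (1 + ‖x‖) ^ (-(r : ℝ)) := by
    refine ((isBigO_refl (fun x ↦ (1 + ‖x‖) ^ (-(r : ℝ))) _).mul (hlim.isBigO_one ℝ)).congr
      (fun x ↦ ?_) (fun x ↦ mul_one _)
    rw [rpow_neg (by positivity), rpow_natCast, inv_mul_cancel_left₀ (by positivity)]
  have hint : Integrable (fun x ↦ (1 + ‖x‖) ^ (-(r : ℝ))) μ :=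
    integrable_one_add_norm (by simp [r])
  exact hcont.locallyIntegrable.integrable_of_isBigO_cocompact hO
    (hint.integrableAtFilter _)

end TemperateGrowth

section MomentFormula

variable {q b v w : ℝ → ℝ}

/-- The antiderivative `(b'' - 2 q b) v² + 2 b w² - 2 b' v w` of the integrand in the moment formula
for a solution `v`, with derivative `w`, of `v'' = q v`. -/
def momentPrimitive (q b v w : ℝ → ℝ) (x : ℝ) : ℝ :=
  (deriv (deriv b) x - 2 * q x * b x) * v x ^ 2 + 2 * b x * w x ^ 2
    + -2 * deriv b x * (v x * w x)

lemma hasDerivAt_momentPrimitive {x : ℝ} (hq : DifferentiableAt ℝ q x) (hb : ContDiff ℝ 3 b)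
    (hv : HasDerivAt v (w x) x) (hw : HasDerivAt w (q x * v x) x) :
    HasDerivAt (momentPrimitive q b v w)
      ((deriv (deriv (deriv b)) x - 4 * q x * deriv b x - 2 * deriv q x * b x) * v x ^ 2) x := by
  have hb' : ContDiff ℝ 2 (deriv b) := (contDiff_succ_iff_deriv (n := 2)).1 hb |>.2.2
  have hb'' : ContDiff ℝ 1 (deriv (deriv b)) := (contDiff_succ_iff_deriv (n := 1)).1 hb' |>.2.2
  have d₀ := (hb.differentiable (by norm_num) x).hasDerivAt
  have d₁ := (hb'.differentiable (by norm_num) x).hasDerivAt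
  have d₂ := (hb''.differentiable (by norm_num) x).hasDerivAt
  refine ((((d₂.sub ((hq.hasDerivAt.const_mul 2).mul d₀)).mul (hv.pow 2)).add
    ((d₀.const_mul 2).mul (hw.pow 2))).add ((d₁.const_mul (-2)).mul (hv.mul hw))).congr_deriv ?_
  simp only [Pi.mul_apply, Pi.sub_apply, Pi.pow_apply]
  push_cast
  ring

lemma tendsto_momentPrimitive {κ : ℝ} (hκ : κ ≠ 0) (hq : q.HasTemperateGrowth)
    (hb : b.HasTemperateGrowth)
    (energy : SuperpolynomialDecay (cocompact ℝ) norm fun x ↦ w x ^ 2 + κ ^ 2 * v x ^ 2) :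
    Tendsto (momentPrimitive q b v w) (cocompact ℝ) (𝓝 0) := by
  have hb' := hasTemperateGrowth_deriv hb
  have hb'' := hasTemperateGrowth_deriv hb'
  have sq_term := hasTemperateGrowth_mul_superpolynomialDecay
    (T := fun x ↦ deriv (deriv b) x - 2 * q x * b x) (by fun_prop)
    (superpolynomialDecay_sq_of_energy hκ energy)
  have deriv_sq_term := hasTemperateGrowth_mul_superpolynomialDecay
    (T := fun x ↦ 2 * b x) (by fun_prop) (superpolynomialDecay_deriv_sq_of_energy energy)
  have mul_term := hasTemperateGrowth_mul_superpolynomialDecay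
    (T := fun x ↦ -2 * deriv b x) (by fun_prop) (superpolynomialDecay_mul_of_energy hκ energy)
  exact (((sq_term.add deriv_sq_term).add mul_term) 0).congr fun x ↦ by
    simp only [pow_zero, one_mul, Pi.add_apply, momentPrimitive]

end MomentFormula

theorem statement17_general {p : ℝ → ℝ} (hp : p.HasTemperateGrowth) {lam : ℝ}
    (hlam : ∃ c > lam, ∀ᶠ x in cocompact ℝ, c ≤ p x) {u : ℝ → ℝ} (hu : ContDiff ℝ 2 u)
    (huL2 : Integrable fun x ↦ u x ^ 2)
    (heq : ∀ x, -(deriv (deriv u) x) + p x * u x = lam * u x)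
    {b : ℝ → ℝ} (hb : b.HasTemperateGrowth) :
    Integrable (fun x ↦ (deriv (deriv (deriv b)) x + 4 * (lam - p x) * deriv b x
        - 2 * deriv p x * b x) * u x ^ 2) ∧
      ∫ x, (deriv (deriv (deriv b)) x + 4 * (lam - p x) * deriv b x
        - 2 * deriv p x * b x) * u x ^ 2 = 0 := by
  obtain ⟨c, hc, hcp⟩ := hlam
  have hκ : 0 < √(c - lam) := sqrt_pos.2 (sub_pos.2 hc)
  have hκq : ∀ᶠ x in cocompact ℝ, √(c - lam) ^ 2 ≤ p x - lam := by
    rw [sq_sqrt (sub_nonneg.2 hc.le)]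
    exact hcp.mono fun x hx ↦ sub_le_sub_right hx lam
  have hu' : ContDiff ℝ 1 (deriv u) := ((contDiff_succ_iff_deriv (n := 1)).1 hu).2.2
  have hv : ∀ x, HasDerivAt u (deriv u x) x := fun x ↦
    (hu.differentiable two_ne_zero x).hasDerivAt
  have hw : ∀ x, HasDerivAt (deriv u) ((p x - lam) * u x) x := fun x ↦
    (hu'.differentiable one_ne_zero x).hasDerivAt.congr_deriv (by linarith [heq x])
  have hq : HasTemperateGrowth fun x ↦ p x - lam := by fun_prop
  have hp' := hasTemperateGrowth_deriv hp
  have hb' := hasTemperateGrowth_deriv hb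
  have hb''' := hasTemperateGrowth_deriv (hasTemperateGrowth_deriv hb')
  have energy := superpolynomialDecay_energy hκ hv hw hκq huL2
  have hcoeff : HasTemperateGrowth fun x ↦
      deriv (deriv (deriv b)) x + 4 * (lam - p x) * deriv b x - 2 * deriv p x * b x := by fun_prop
  have hint := integrable_of_superpolynomialDecay (μ := volume)
    (hcoeff.1.continuous.mul (hu.continuous.pow 2))
    (hasTemperateGrowth_mul_superpolynomialDecay hcoeff
      (superpolynomialDecay_sq_of_energy hκ.ne' energy))
  have hderiv := fun x ↦ (hasDerivAt_momentPrimitive (hq.1.differentiable (by simp) x)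
    (contDiff_infty.1 hb.1 3) (hv x) (hw x)).congr_deriv
    (g' := (deriv (deriv (deriv b)) x + 4 * (lam - p x) * deriv b x
      - 2 * deriv p x * b x) * u x ^ 2) (by rw [deriv_sub_const]; ring)
  have hlim := tendsto_momentPrimitive hκ.ne' hq hb energy
  refine ⟨hint, ?_⟩
  rw [integral_of_hasDerivAt_of_tendsto hderiv hint (hlim.mono_left atBot_le_cocompact)
    (hlim.mono_left atTop_le_cocompact), sub_self]

/-- Lemma A.1, whole-line case: moment formula for `L²` solutions of
`-u'' + p u = λ u` on `ℝ`, with a confining polynomial potential `p`. -/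
theorem statement17 (p : Polynomial ℝ)
    (hp : Tendsto (fun x : ℝ => p.eval x) (cocompact ℝ) atTop)
    (lam : ℝ) (u : ℝ → ℝ) (hu : ContDiff ℝ 2 u)
    (huL2 : Integrable (fun x => u x ^ 2))
    (heq : ∀ x : ℝ, -(deriv (deriv u) x) + p.eval x * u x = lam * u x)
    (b : Polynomial ℝ) :
    Integrable (fun x =>
      ((Polynomial.derivative (Polynomial.derivative (Polynomial.derivative b))).eval x
        + 4 * (lam - p.eval x) * (Polynomial.derivative b).eval x
        - 2 * (Polynomial.derivative p).eval x * b.eval x) * u x ^ 2) ∧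
    ∫ x : ℝ,
        ((Polynomial.derivative (Polynomial.derivative (Polynomial.derivative b))).eval x
          + 4 * (lam - p.eval x) * (Polynomial.derivative b).eval x
          - 2 * (Polynomial.derivative p).eval x * b.eval x) * u x ^ 2 = 0 := by
  simpa only [deriv_polynomial_eval] using statement17_general (hasTemperateGrowth_eval p)
    ⟨lam + 1, lt_add_one lam, hp.eventually_ge_atTop (lam + 1)⟩ hu huL2 heq
    (hasTemperateGrowth_eval b)
end
end

section
/- Let ζ, ν ∈ ℝ and let φ ∈ C²(ℝ;ℝ) ∩ L²(ℝ) satisfy −φ″(ρ) + (ζ + ρ²)²·φ(ρ) = ν·φ(ρ) for all ρ ∈ ℝ. Then for every a with 0 < a < 1/3 and every k ∈ ℕ there exists a constant C_k (depending on ζ, ν, a and k but not on φ) such that ∫_ℝ e^{2a|ρ|³}·(|φ(ρ)|² + |ρᵏ·φ(ρ)|² + |φ^{(k)}(ρ)|²) dρ ≤ C_k·∫_ℝ |φ(ρ)|² dρ. (In particular φ ∈ 𝒮(ℝ).) -/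
noncomputable section
open MeasureTheory Real Set Filter

/-!
Let `f'' = V f` with `f ∈ L²`. Where `V ≥ 0` the function `f f'` is nondecreasing, since
`(f f')' = f'² + V f²`, and it stays nonpositive towards `+∞`: otherwise `f²` would eventually
increase. Agmon's condition `Φ'² ≤ (1 - δ)(V - δ)` on a weight `exp (2Φ)` gives the pointwise bound
`(exp (2Φ) f f')' ≥ δ exp (2Φ) (f² + f'²)`, whose integral controls the weighted tail by the
boundary value of `-f f'`, and hence by the `L²` norm of `f`. A reflection treats `-∞`, and the
integrated identity for `(f f')'` treats the compact middle part.

For the Montgomery potential, `Φ = b |x|³` satisfies Agmon's condition near infinity whenever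
`0 < b < 1/3`. The equation turns `f⁽ᵏ⁾` into `P f + Q f'` with polynomials `P` and `Q`, and
polynomial factors are absorbed by taking `a < b < 1/3`.
-/

lemma pow_le_mul_exp {ε y : ℝ} (hε : 0 < ε) {m : ℕ} (hm : m ≠ 0) (hy : 0 ≤ y) (n : ℕ) :
    y ^ n ≤ (1 + n.factorial / ε ^ n) * exp (ε * y ^ m) := by
  have hpow : y ^ n ≤ 1 + (y ^ m) ^ n := by
    rw [← pow_mul]
    rcases le_total y 1 with hy1 | hy1
    · linarith [pow_le_one₀ (n := n) hy hy1, pow_nonneg hy (m * n)]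
    · linarith [pow_le_pow_right₀ hy1 (Nat.le_mul_of_pos_left n (Nat.pos_of_ne_zero hm))]
  have hexp : (y ^ m) ^ n ≤ n.factorial / ε ^ n * exp (ε * y ^ m) := by
    have := pow_div_factorial_le_exp (ε * y ^ m) (by positivity) n
    rw [div_le_iff₀ (by positivity), mul_pow] at this
    rw [div_mul_eq_mul_div, le_div_iff₀ (by positivity)]
    linarith
  have hone : 1 ≤ exp (ε * y ^ m) := one_le_exp (by positivity)
  linarith

lemma exists_abs_eval_le_mul_exp (P : Polynomial ℝ) {ε : ℝ} (hε : 0 < ε) {m : ℕ} (hm : m ≠ 0) :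
    ∃ K, 0 ≤ K ∧ ∀ x, |P.eval x| ≤ K * exp (ε * |x| ^ m) := by
  induction P using Polynomial.induction_on' with
  | add P Q hP hQ =>
    obtain ⟨K, hK, hPK⟩ := hP
    obtain ⟨L, hL, hQL⟩ := hQ
    refine ⟨K + L, by positivity, fun x => ?_⟩
    rw [Polynomial.eval_add, add_mul]
    exact (abs_add_le _ _).trans (add_le_add (hPK x) (hQL x))
  | monomial n c =>
    refine ⟨|c| * (1 + n.factorial / ε ^ n), by positivity, fun x => ?_⟩
    rw [Polynomial.eval_monomial, abs_mul, abs_pow, mul_assoc]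
    gcongr
    exact pow_le_mul_exp hε hm (abs_nonneg x) n

lemma integrable_and_integral_eq_add_intervalIntegral_add {F : Type*} [NormedAddCommGroup F]
    [NormedSpace ℝ F] {W : ℝ → F} (hW : LocallyIntegrable W) {s t : ℝ}
    (hs : IntegrableOn W (Iic s)) (ht : IntegrableOn W (Ioi t)) :
    Integrable W ∧
      ∫ x, W x = (∫ x in Iic s, W x) + (∫ x in s..t, W x) + ∫ x in Ioi t, W x := by
  have hint : Integrable W := integrable_iff_integrableAtFilter_atBot_atTop.2
    ⟨⟨⟨_, Iic_mem_atBot s, hs⟩, ⟨_, Ioi_mem_atTop t, ht⟩⟩, hW⟩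
  refine ⟨hint, ?_⟩
  rw [← intervalIntegral.integral_Iic_add_Ioi (b := t) hint.integrableOn ht,
    ← intervalIntegral.integral_Iic_sub_Iic hs hint.integrableOn, add_sub_cancel]

section HalfLine

variable {u q q' h : ℝ → ℝ} {r B : ℝ}

lemma nonpos_of_monotoneOn_of_integrableOn_Ioi (hu : MonotoneOn u (Ici r))
    (hint : IntegrableOn u (Ioi r)) : u r ≤ 0 := by
  by_contra! hpos
  have hconst : IntegrableOn (fun _ => u r) (Ioi r) := by
    refine Integrable.mono' hint aestronglyMeasurable_const ?_
    refine (ae_restrict_iff' measurableSet_Ioi).2 (ae_of_all _ fun x hx => ?_)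
    rw [norm_of_nonneg hpos.le]
    exact hu self_mem_Ici hx.out.le hx.out.le
  simp [integrableOn_const_iff, hpos.ne'] at hconst

lemma mul_le_setIntegral_Ioi_of_antitoneOn (hu : AntitoneOn u (Ici r))
    (hint : IntegrableOn u (Ioi r)) (hnonneg : ∀ x ∈ Ioi r, 0 ≤ u x) {s : ℝ} (hs : 0 ≤ s) :
    s * u (r + s) ≤ ∫ x in Ioi r, u x := by
  have hint' : IntegrableOn u (Ioc r (r + s)) := hint.mono_set Ioc_subset_Ioi_self
  calc s * u (r + s) = ∫ _ in Ioc r (r + s), u (r + s) := by simp [hs]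
    _ ≤ ∫ x in Ioc r (r + s), u x :=
      setIntegral_mono_on (integrableOn_const (by simp)) hint' measurableSet_Ioc fun x hx =>
        hu hx.1.le (le_add_of_nonneg_right hs) hx.2
    _ ≤ ∫ x in Ioi r, u x :=
      setIntegral_mono_set hint ((ae_restrict_iff' measurableSet_Ioi).2 (ae_of_all _ hnonneg))
        Ioc_subset_Ioi_self.eventuallyLE

lemma integrableOn_Ioi_and_setIntegral_le_of_le_hasDerivAt (hh : LocallyIntegrable h)
    (hnonneg : ∀ x ∈ Ici r, 0 ≤ h x) (hq : ∀ x ∈ Ici r, HasDerivAt q (q' x) x)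
    (hle : ∀ x ∈ Ici r, h x ≤ q' x) (hB : ∀ x ∈ Ici r, q x ≤ B) :
    IntegrableOn h (Ioi r) ∧ ∫ x in Ioi r, h x ≤ B - q r := by
  have hbound : ∀ T, r ≤ T → ∫ x in r..T, h x ≤ B - q r := fun T hT =>
    (intervalIntegral.integral_le_sub_of_hasDeriv_right_of_le hT
      (fun x hx => (hq x hx.1).continuousAt.continuousWithinAt)
      (fun x hx => (hq x hx.1.le).hasDerivWithinAt) (hh.integrableOn_isCompact isCompact_Icc)
      (fun x hx => hle x hx.1.le)).trans (sub_le_sub_right (hB T hT) _)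
  have hint : IntegrableOn h (Ioi r) := by
    refine integrableOn_Ioi_of_intervalIntegral_norm_bounded (B - q r) r
      (fun T => (hh.integrableOn_isCompact isCompact_Icc).mono_set Ioc_subset_Icc_self)
      tendsto_id ?_
    filter_upwards [eventually_ge_atTop r] with T hT
    refine (intervalIntegral.integral_congr fun x hx => ?_).trans_le (hbound T hT)
    rw [id_eq, uIcc_of_le hT] at hx
    exact norm_of_nonneg (hnonneg x hx.1)
  refine ⟨hint, le_of_tendsto (intervalIntegral_tendsto_integral_Ioi r hint tendsto_id) ?_⟩
  filter_upwards [eventually_ge_atTop r] with T hT using hbound T hT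

end HalfLine

lemma nonneg_of_agmon {δ c v : ℝ} (hδ : 0 < δ) (hδ' : δ < 1) (hc : c ^ 2 ≤ (1 - δ) * (v - δ)) :
    0 ≤ v :=
  hδ.le.trans <| sub_nonneg.1 <|
    nonneg_of_mul_nonneg_right ((sq_nonneg c).trans hc) (sub_pos.2 hδ')

lemma mul_sq_add_sq_le_of_agmon {δ c v : ℝ} (hδ : δ < 1) (hc : c ^ 2 ≤ (1 - δ) * (v - δ))
    (y z : ℝ) :
    δ * (y ^ 2 + z ^ 2) ≤ 2 * c * (y * z) + (z ^ 2 + v * y ^ 2) := by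
  -- Multiplied by `1 - δ`, the difference of the two sides is a complete square plus `hc * y ^ 2`.
  have hsq : 0 ≤ ((1 - δ) * z + c * y) ^ 2 := sq_nonneg _
  have hcy := mul_le_mul_of_nonneg_right hc (sq_nonneg y)
  refine le_of_mul_le_mul_left ?_ (sub_pos.2 hδ)
  linarith

/-- `f` solves the one-dimensional stationary Schrödinger equation `f'' = V f` on the real line.
The eigenvalue is absorbed into the potential `V`. -/
structure IsSchrodingerSolution (V f : ℝ → ℝ) : Prop where
  differentiable : Differentiable ℝ f
  hasDerivAt_deriv : ∀ x, HasDerivAt (deriv f) (V x * f x) x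

namespace IsSchrodingerSolution

variable {V f Φ : ℝ → ℝ} {r δ : ℝ}

lemma continuous (hf : IsSchrodingerSolution V f) : Continuous f :=
  hf.differentiable.continuous

lemma continuous_deriv (hf : IsSchrodingerSolution V f) : Continuous (deriv f) :=
  continuous_iff_continuousAt.2 fun x => (hf.hasDerivAt_deriv x).continuousAt

lemma comp_neg (hf : IsSchrodingerSolution V f) :
    IsSchrodingerSolution (fun x => V (-x)) (fun x => f (-x)) where
  differentiable := hf.differentiable.comp differentiable_neg
  hasDerivAt_deriv x := by
    have hderiv : deriv (fun x => f (-x)) = fun x => -deriv f (-x) :=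
      funext fun x => deriv_comp_neg f x
    rw [hderiv]
    exact ((hf.hasDerivAt_deriv (-x)).scomp x (hasDerivAt_neg x)).neg.congr_deriv (by simp)

lemma hasDerivAt_sq (hf : IsSchrodingerSolution V f) (x : ℝ) :
    HasDerivAt (fun x => f x ^ 2) (2 * (f x * deriv f x)) x := by
  refine ((hf.differentiable x).hasDerivAt.pow 2).congr_deriv ?_
  push_cast
  ring

lemma hasDerivAt_mul_deriv (hf : IsSchrodingerSolution V f) (x : ℝ) :
    HasDerivAt (fun x => f x * deriv f x) (deriv f x ^ 2 + V x * f x ^ 2) x := by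
  refine ((hf.differentiable x).hasDerivAt.mul (hf.hasDerivAt_deriv x)).congr_deriv ?_
  ring

lemma monotoneOn_mul_deriv (hf : IsSchrodingerSolution V f) (hV : ∀ x ∈ Ici r, 0 ≤ V x) :
    MonotoneOn (fun x => f x * deriv f x) (Ici r) := by
  refine monotoneOn_of_hasDerivWithinAt_nonneg (convex_Ici r)
    (hf.continuous.mul hf.continuous_deriv).continuousOn
    (fun x _ => (hf.hasDerivAt_mul_deriv x).hasDerivWithinAt) fun x hx => ?_
  have := hV x (interior_subset hx)
  positivity

lemma mul_deriv_nonpos (hf : IsSchrodingerSolution V f) (hV : ∀ x ∈ Ici r, 0 ≤ V x)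
    (hint : IntegrableOn (fun x => f x ^ 2) (Ioi r)) {x : ℝ} (hx : r ≤ x) :
    f x * deriv f x ≤ 0 := by
  -- Otherwise `f ^ 2` would be nondecreasing to the right of `x`, hence not integrable.
  by_contra! hpos
  have hmono : MonotoneOn (fun y => f y ^ 2) (Ici x) := by
    refine monotoneOn_of_hasDerivWithinAt_nonneg (convex_Ici x) (hf.continuous.pow 2).continuousOn
      (fun y _ => (hf.hasDerivAt_sq y).hasDerivWithinAt) fun y hy => ?_
    have hxy : x ≤ y := interior_subset hy
    have := hf.monotoneOn_mul_deriv hV hx (hx.trans hxy) hxy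
    linarith
  have hsq := nonpos_of_monotoneOn_of_integrableOn_Ioi hmono (hint.mono_set (Ioi_subset_Ioi hx))
  have hfx : f x = 0 := sq_nonpos_iff _ |>.1 hsq
  simp [hfx] at hpos

lemma mul_deriv_nonneg (hf : IsSchrodingerSolution V f) (hV : ∀ x ∈ Iic r, 0 ≤ V x)
    (hint : IntegrableOn (fun x => f x ^ 2) (Iic r)) {x : ℝ} (hx : x ≤ r) :
    0 ≤ f x * deriv f x := by
  have hint' : IntegrableOn (fun x => f (-x) ^ 2) (Ioi (-r)) := by
    rw [← neg_neg r] at hint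
    exact hint.comp_neg_Ici.mono_set Ioi_subset_Ici_self
  have hreflected := hf.comp_neg.mul_deriv_nonpos (fun y hy => hV (-y) (neg_le.1 hy.out)) hint'
    (neg_le_neg hx)
  simpa only [deriv_comp_neg, neg_neg, mul_neg, neg_nonpos] using hreflected

lemma antitoneOn_sq (hf : IsSchrodingerSolution V f) (hV : ∀ x ∈ Ici r, 0 ≤ V x)
    (hint : IntegrableOn (fun x => f x ^ 2) (Ioi r)) :
    AntitoneOn (fun x => f x ^ 2) (Ici r) := by
  refine antitoneOn_of_hasDerivWithinAt_nonpos (convex_Ici r) (hf.continuous.pow 2).continuousOn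
    (fun x _ => (hf.hasDerivAt_sq x).hasDerivWithinAt) fun x hx => ?_
  linarith [hf.mul_deriv_nonpos hV hint (interior_subset hx : r ≤ x)]

lemma neg_mul_deriv_le (hf : IsSchrodingerSolution V f) (hV : ∀ x ∈ Ici r, 0 ≤ V x)
    (hint : IntegrableOn (fun x => f x ^ 2) (Ioi r)) :
    -(f (r + 2) * deriv f (r + 2)) ≤ (∫ x in Ioi r, f x ^ 2) / 2 := by
  have hsq : 1 * f (r + 1) ^ 2 ≤ ∫ x in Ioi r, f x ^ 2 :=
    mul_le_setIntegral_Ioi_of_antitoneOn (hf.antitoneOn_sq hV hint) hint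
      (fun x _ => sq_nonneg _) zero_le_one
  obtain ⟨c, hc, hslope⟩ := exists_hasDerivAt_eq_slope (fun x => f x ^ 2) _
    (by linarith : r + 1 < r + 2) (hf.continuous.pow 2).continuousOn fun x _ => hf.hasDerivAt_sq x
  have hmono : f c * deriv f c ≤ f (r + 2) * deriv f (r + 2) :=
    hf.monotoneOn_mul_deriv hV (mem_Ici.2 (by linarith [hc.1])) (mem_Ici.2 (by linarith)) hc.2.le
  rw [show r + 2 - (r + 1) = 1 by ring, div_one] at hslope
  linarith [sq_nonneg (f (r + 2))]

lemma intervalIntegral_sq_deriv_le (hf : IsSchrodingerSolution V f) {s t M : ℝ} (hst : s ≤ t)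
    (hV : ∀ x ∈ Icc s t, -M ≤ V x) :
    ∫ x in s..t, deriv f x ^ 2 ≤
      M * (∫ x in s..t, f x ^ 2) + (f t * deriv f t - f s * deriv f s) := by
  have hfc := hf.continuous
  have hfc' := hf.continuous_deriv
  have henergy : ∫ x in s..t, (deriv f x ^ 2 - M * f x ^ 2) ≤ f t * deriv f t - f s * deriv f s :=
    intervalIntegral.integral_le_sub_of_hasDeriv_right_of_le hst (hfc.mul hfc').continuousOn
      (fun x _ => (hf.hasDerivAt_mul_deriv x).hasDerivWithinAt)
      (by fun_prop : Continuous fun x => deriv f x ^ 2 - M * f x ^ 2).integrableOn_Icc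
      fun x hx => by nlinarith [hV x (Ioo_subset_Icc_self hx), sq_nonneg (f x)]
  rw [intervalIntegral.integral_sub (Continuous.intervalIntegrable (by fun_prop) _ _)
    (Continuous.intervalIntegrable (by fun_prop) _ _),
    intervalIntegral.integral_const_mul] at henergy
  linarith

lemma integrableOn_Ioi_and_setIntegral_exp_mul_le (hf : IsSchrodingerSolution V f)
    (hint : IntegrableOn (fun x => f x ^ 2) (Ioi r)) (hΦ : Differentiable ℝ Φ) (hδ : 0 < δ)
    (hδ' : δ < 1) (hagmon : ∀ x ∈ Ici r, deriv Φ x ^ 2 ≤ (1 - δ) * (V x - δ)) :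
    IntegrableOn (fun x => exp (2 * Φ x) * (f x ^ 2 + deriv f x ^ 2)) (Ioi (r + 2)) ∧
      ∫ x in Ioi (r + 2), exp (2 * Φ x) * (f x ^ 2 + deriv f x ^ 2) ≤
        exp (2 * Φ (r + 2)) / (2 * δ) * ∫ x in Ioi r, f x ^ 2 := by
  have hfc := hf.continuous
  have hfc' := hf.continuous_deriv
  have hΦc := hΦ.continuous
  have hr : r ≤ r + 2 := by linarith
  have hV : ∀ x ∈ Ici r, 0 ≤ V x := fun x hx => nonneg_of_agmon hδ hδ' (hagmon x hx)
  have hweight (x : ℝ) : HasDerivAt (fun x => exp (2 * Φ x) * (f x * deriv f x))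
      (exp (2 * Φ x) * (2 * deriv Φ x * (f x * deriv f x) + (deriv f x ^ 2 + V x * f x ^ 2))) x :=
    ((((hΦ x).hasDerivAt.const_mul 2).exp).mul (hf.hasDerivAt_mul_deriv x)).congr_deriv (by ring)
  have hcoercive : ∀ x ∈ Ici (r + 2), δ * (exp (2 * Φ x) * (f x ^ 2 + deriv f x ^ 2)) ≤
      exp (2 * Φ x) * (2 * deriv Φ x * (f x * deriv f x) + (deriv f x ^ 2 + V x * f x ^ 2)) := by
    intro x hx
    rw [mul_left_comm]
    gcongr
    exact mul_sq_add_sq_le_of_agmon hδ' (hagmon x (hr.trans hx.out)) _ _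
  obtain ⟨hintδ, hle⟩ := integrableOn_Ioi_and_setIntegral_le_of_le_hasDerivAt (r := r + 2) (B := 0)
    (h := fun x => δ * (exp (2 * Φ x) * (f x ^ 2 + deriv f x ^ 2)))
    (Continuous.locallyIntegrable (by fun_prop))
    (fun x _ => by positivity) (fun x _ => hweight x) hcoercive
    (fun x hx => mul_nonpos_of_nonneg_of_nonpos (exp_pos _).le
      (hf.mul_deriv_nonpos hV hint (hr.trans hx.out)))
  refine ⟨(integrable_const_mul_iff hδ.ne'.isUnit _).1 hintδ, ?_⟩
  rw [integral_const_mul] at hle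
  have hboundary := mul_le_mul_of_nonneg_left (hf.neg_mul_deriv_le hV hint)
    (exp_pos (2 * Φ (r + 2))).le
  rw [div_mul_eq_mul_div, le_div_iff₀ (by positivity)]
  linarith

lemma integrableOn_Iic_and_setIntegral_exp_mul_le (hf : IsSchrodingerSolution V f)
    (hint : IntegrableOn (fun x => f x ^ 2) (Iic (-r))) (hΦ : Differentiable ℝ Φ) (hδ : 0 < δ)
    (hδ' : δ < 1) (hagmon : ∀ x ∈ Iic (-r), deriv Φ x ^ 2 ≤ (1 - δ) * (V x - δ)) :
    IntegrableOn (fun x => exp (2 * Φ x) * (f x ^ 2 + deriv f x ^ 2)) (Iic (-(r + 2))) ∧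
      ∫ x in Iic (-(r + 2)), exp (2 * Φ x) * (f x ^ 2 + deriv f x ^ 2) ≤
        exp (2 * Φ (-(r + 2))) / (2 * δ) * ∫ x in Iic (-r), f x ^ 2 := by
  have hneg := hf.comp_neg.integrableOn_Ioi_and_setIntegral_exp_mul_le (r := r)
    (Φ := fun x => Φ (-x)) (hint.comp_neg_Ici.mono_set Ioi_subset_Ici_self)
    (hΦ.comp differentiable_neg) hδ hδ' fun x hx => by
      simpa only [deriv_comp_neg, neg_sq] using hagmon (-x) (neg_le_neg hx.out)
  simp only [deriv_comp_neg, neg_sq] at hneg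
  rw [integral_comp_neg_Ioi r fun x => f x ^ 2,
    integral_comp_neg_Ioi (r + 2) fun x => exp (2 * Φ x) * (f x ^ 2 + deriv f x ^ 2)] at hneg
  have hIci : IntegrableOn (fun x => exp (2 * Φ (-x)) * (f (-x) ^ 2 + deriv f (-x) ^ 2))
      (Ici (r + 2)) := (integrableOn_Ici_iff_integrableOn_Ioi).2 hneg.1
  rw [← neg_neg (r + 2)] at hIci
  refine ⟨?_, hneg.2⟩
  simpa only [neg_neg] using hIci.comp_neg_Iic

lemma intervalIntegral_exp_mul_le (hf : IsSchrodingerSolution V f)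
    (hint : Integrable fun x => f x ^ 2) (hΦ : Continuous Φ) {s t M E : ℝ} (hst : s ≤ t)
    (hs : 0 ≤ f s * deriv f s) (ht : f t * deriv f t ≤ 0) (hM : ∀ x ∈ Icc s t, |V x| ≤ M)
    (hE : ∀ x ∈ Icc s t, exp (2 * Φ x) ≤ E) :
    ∫ x in s..t, exp (2 * Φ x) * (f x ^ 2 + deriv f x ^ 2) ≤ E * (1 + M) * ∫ x, f x ^ 2 := by
  have hfc := hf.continuous
  have hfc' := hf.continuous_deriv
  have hM0 : 0 ≤ M := (abs_nonneg _).trans (hM s (left_mem_Icc.2 hst))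
  have hE0 : 0 ≤ E := (exp_pos _).le.trans (hE s (left_mem_Icc.2 hst))
  have hsq : ∫ x in s..t, f x ^ 2 ≤ ∫ x, f x ^ 2 := by
    rw [intervalIntegral.integral_of_le hst]
    exact setIntegral_le_integral hint (ae_of_all _ fun x => sq_nonneg _)
  have hderiv : ∫ x in s..t, deriv f x ^ 2 ≤ M * ∫ x in s..t, f x ^ 2 := by
    linarith [hf.intervalIntegral_sq_deriv_le hst fun x hx => (abs_le.1 (hM x hx)).1]
  calc ∫ x in s..t, exp (2 * Φ x) * (f x ^ 2 + deriv f x ^ 2)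
      ≤ ∫ x in s..t, E * (f x ^ 2 + deriv f x ^ 2) := by
        refine intervalIntegral.integral_mono_on hst
          (Continuous.intervalIntegrable (by fun_prop) _ _)
          (Continuous.intervalIntegrable (by fun_prop) _ _) fun x hx => ?_
        gcongr
        exact hE x hx
    _ = E * ((∫ x in s..t, f x ^ 2) + ∫ x in s..t, deriv f x ^ 2) := by
        rw [intervalIntegral.integral_const_mul, intervalIntegral.integral_add
          (Continuous.intervalIntegrable (by fun_prop) _ _)
          (Continuous.intervalIntegrable (by fun_prop) _ _)]
    _ ≤ E * ((1 + M) * ∫ x, f x ^ 2) := by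
        gcongr
        linarith [mul_le_mul_of_nonneg_left hsq hM0]
    _ = E * (1 + M) * ∫ x, f x ^ 2 := (mul_assoc _ _ _).symm

lemma integrable_and_integral_exp_mul_le (hf : IsSchrodingerSolution V f)
    (hint : Integrable fun x => f x ^ 2) (hΦ : Differentiable ℝ Φ) (hδ : 0 < δ) (hδ' : δ < 1)
    (hr : 0 ≤ r) (hagmon : ∀ x, r ≤ |x| → deriv Φ x ^ 2 ≤ (1 - δ) * (V x - δ)) {M E : ℝ}
    (hM : ∀ x ∈ Icc (-(r + 2)) (r + 2), |V x| ≤ M)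
    (hE : ∀ x ∈ Icc (-(r + 2)) (r + 2), exp (2 * Φ x) ≤ E) :
    Integrable (fun x => exp (2 * Φ x) * (f x ^ 2 + deriv f x ^ 2)) ∧
      ∫ x, exp (2 * Φ x) * (f x ^ 2 + deriv f x ^ 2) ≤
        E * (1 + M + 1 / δ) * ∫ x, f x ^ 2 := by
  have hIci : ∀ x ∈ Ici r, deriv Φ x ^ 2 ≤ (1 - δ) * (V x - δ) :=
    fun x hx => hagmon x (hx.out.trans (le_abs_self x))
  have hIic : ∀ x ∈ Iic (-r), deriv Φ x ^ 2 ≤ (1 - δ) * (V x - δ) :=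
    fun x hx => hagmon x (le_abs.2 (Or.inr (le_neg.1 hx.out)))
  have hmiddle := hf.intervalIntegral_exp_mul_le hint hΦ.continuous
    (by linarith : -(r + 2) ≤ r + 2)
    (hf.mul_deriv_nonneg (fun x hx => nonneg_of_agmon hδ hδ' (hIic x hx)) hint.integrableOn
      (by linarith))
    (hf.mul_deriv_nonpos (fun x hx => nonneg_of_agmon hδ hδ' (hIci x hx)) hint.integrableOn
      (by linarith)) hM hE
  obtain ⟨hintR, hright⟩ := hf.integrableOn_Ioi_and_setIntegral_exp_mul_le hint.integrableOn hΦ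
    hδ hδ' hIci
  obtain ⟨hintL, hleft⟩ := hf.integrableOn_Iic_and_setIntegral_exp_mul_le hint.integrableOn hΦ
    hδ hδ' hIic
  have htail {x : ℝ} {s : Set ℝ} (hx : x ∈ Icc (-(r + 2)) (r + 2)) :
      exp (2 * Φ x) / (2 * δ) * ∫ y in s, f y ^ 2 ≤ E / (2 * δ) * ∫ y, f y ^ 2 := by
    have hset : ∫ y in s, f y ^ 2 ≤ ∫ y, f y ^ 2 :=
      setIntegral_le_integral hint (ae_of_all _ fun y => sq_nonneg (f y))
    have hE0 : 0 ≤ E := (exp_pos _).le.trans (hE x hx)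
    gcongr
    exact hE x hx
  have hcont : Continuous fun x => exp (2 * Φ x) * (f x ^ 2 + deriv f x ^ 2) :=
    (hΦ.continuous.const_mul 2).rexp.mul ((hf.continuous.pow 2).add (hf.continuous_deriv.pow 2))
  obtain ⟨hweighted, hsplit⟩ :=
    integrable_and_integral_eq_add_intervalIntegral_add hcont.locallyIntegrable hintL hintR
  refine ⟨hweighted, ?_⟩
  calc _ ≤ E / (2 * δ) * (∫ x, f x ^ 2) + E * (1 + M) * (∫ x, f x ^ 2) +
        E / (2 * δ) * ∫ x, f x ^ 2 := by
        rw [hsplit]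
        gcongr
        · exact hleft.trans (htail (left_mem_Icc.2 (by linarith)))
        · exact hright.trans (htail (right_mem_Icc.2 (by linarith)))
    _ = E * (1 + M + 1 / δ) * ∫ x, f x ^ 2 := by
        field_simp
        ring

theorem exists_forall_integral_exp_mul_le (hV : Continuous V) (hΦ : Differentiable ℝ Φ)
    (hδ : 0 < δ) (hδ' : δ < 1)
    (hagmon : ∀ᶠ x in cocompact ℝ, deriv Φ x ^ 2 ≤ (1 - δ) * (V x - δ)) :
    ∃ C, ∀ f, IsSchrodingerSolution V f → Integrable (fun x => f x ^ 2) →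
      Integrable (fun x => exp (2 * Φ x) * (f x ^ 2 + deriv f x ^ 2)) ∧
        ∫ x, exp (2 * Φ x) * (f x ^ 2 + deriv f x ^ 2) ≤ C * ∫ x, f x ^ 2 := by
  rw [← Metric.cobounded_eq_cocompact, hasBasis_cobounded_norm.eventually_iff] at hagmon
  obtain ⟨r, -, hr⟩ := hagmon
  have hK : IsCompact (Icc (-(max r 0 + 2)) (max r 0 + 2)) := isCompact_Icc
  obtain ⟨M, hM⟩ := hK.exists_bound_of_continuousOn hV.continuousOn
  obtain ⟨E, hE⟩ := hK.bddAbove_image (hΦ.continuous.const_mul 2).rexp.continuousOn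
  exact ⟨_, fun f hf hint => hf.integrable_and_integral_exp_mul_le hint hΦ hδ hδ'
    (le_max_right r 0) (fun x hx => hr ((le_max_left r 0).trans hx)) hM
    fun x hx => hE (mem_image_of_mem _ hx)⟩

lemma exists_iteratedDeriv_eq (V : Polynomial ℝ) (k : ℕ) :
    ∃ P Q : Polynomial ℝ, ∀ f, IsSchrodingerSolution (fun x => V.eval x) f →
      iteratedDeriv k f = fun x => P.eval x * f x + Q.eval x * deriv f x := by
  induction k with
  | zero => exact ⟨1, 0, fun f _ => by simp⟩
  | succ k ih =>
    obtain ⟨P, Q, hPQ⟩ := ih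
    refine ⟨P.derivative + Q * V, P + Q.derivative, fun f hf => ?_⟩
    ext x
    rw [iteratedDeriv_succ, hPQ f hf]
    refine (((P.hasDerivAt x).mul (hf.differentiable x).hasDerivAt).add
      ((Q.hasDerivAt x).mul (hf.hasDerivAt_deriv x))).deriv.trans ?_
    simp only [Polynomial.eval_add, Polynomial.eval_mul]
    ring

lemma exists_exp_mul_sq_iteratedDeriv_le (V : Polynomial ℝ) {a b : ℝ} (hab : a < b) {m : ℕ}
    (hm : m ≠ 0) (k : ℕ) :
    ∃ K, 0 ≤ K ∧ ∀ f, IsSchrodingerSolution (fun x => V.eval x) f → ∀ x,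
      exp (2 * (a * |x| ^ m)) * (f x ^ 2 + (x ^ k * f x) ^ 2 + iteratedDeriv k f x ^ 2) ≤
        K * (exp (2 * (b * |x| ^ m)) * (f x ^ 2 + deriv f x ^ 2)) := by
  obtain ⟨P, Q, hPQ⟩ := exists_iteratedDeriv_eq V k
  obtain ⟨K, hK, hle⟩ := exists_abs_eval_le_mul_exp (1 + (Polynomial.X ^ k) ^ 2 + P ^ 2 + Q ^ 2)
    (by linarith : 0 < 2 * (b - a)) hm
  refine ⟨K, hK, fun f hf x => ?_⟩
  have hx := (le_abs_self _).trans (hle x)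
  simp only [Polynomial.eval_add, Polynomial.eval_pow, Polynomial.eval_X,
    Polynomial.eval_one] at hx
  have hcauchy : f x ^ 2 + (x ^ k * f x) ^ 2 + iteratedDeriv k f x ^ 2 ≤
      (1 + (x ^ k) ^ 2 + P.eval x ^ 2 + Q.eval x ^ 2) * (f x ^ 2 + deriv f x ^ 2) := by
    rw [hPQ f hf]
    linarith [sq_nonneg (P.eval x * deriv f x - Q.eval x * f x), sq_nonneg (deriv f x),
      sq_nonneg (x ^ k * deriv f x)]
  calc _ ≤ exp (2 * (a * |x| ^ m)) *
        (K * exp (2 * (b - a) * |x| ^ m) * (f x ^ 2 + deriv f x ^ 2)) := by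
        gcongr
        exact hcauchy.trans (by gcongr)
    _ = K * (exp (2 * (a * |x| ^ m) + 2 * (b - a) * |x| ^ m) * (f x ^ 2 + deriv f x ^ 2)) := by
        rw [exp_add]
        ring
    _ = _ := by ring_nf

end IsSchrodingerSolution

lemma hasDerivAt_abs_pow (n : ℕ) (x : ℝ) :
    HasDerivAt (fun x : ℝ => |x| ^ (n + 2)) ((n + 2) * |x| ^ n * x) x := by
  have hrpow := hasDerivAt_abs_rpow x (p := (n + 2 : ℕ)) (by norm_cast; lia)
  rw [show ((n + 2 : ℕ) : ℝ) - 2 = n by push_cast; ring] at hrpow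
  exact_mod_cast hrpow

/-- The potential `(ζ + x²)² - ν` of the Montgomery operator, shifted by the eigenvalue `ν`. -/
def montgomeryPotential (ζ ν : ℝ) : Polynomial ℝ :=
  (Polynomial.C ζ + Polynomial.X ^ 2) ^ 2 - Polynomial.C ν

lemma eval_montgomeryPotential (ζ ν x : ℝ) :
    (montgomeryPotential ζ ν).eval x = (ζ + x ^ 2) ^ 2 - ν := by
  simp [montgomeryPotential]

lemma eventually_add_le_eval_montgomeryPotential (ζ ν d : ℝ) {c : ℝ} (hc : c < 1) :
    ∀ᶠ x in cocompact ℝ, c * x ^ 4 + d ≤ (montgomeryPotential ζ ν).eval x := by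
  have hsq : Tendsto (fun x : ℝ => x ^ 2) (cocompact ℝ) atTop := by
    simpa only [norm_eq_abs, sq_abs, Function.comp_def] using
      (tendsto_pow_atTop two_ne_zero).comp (tendsto_norm_cocompact_atTop (E := ℝ))
  have hlin : Tendsto (fun x : ℝ => (1 - c) * x ^ 2 + 2 * ζ) (cocompact ℝ) atTop :=
    tendsto_atTop_add_const_right _ _ (hsq.const_mul_atTop (sub_pos.2 hc))
  filter_upwards [(hsq.atTop_mul_atTop₀ hlin).eventually_ge_atTop (ν + d - ζ ^ 2)] with x hx
  rw [eval_montgomeryPotential]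
  linarith

lemma exists_forall_integral_exp_abs_cube_mul_le (ζ ν : ℝ) {b : ℝ} (hb : 0 < b) (hb' : b < 1 / 3) :
    ∃ C, ∀ f, IsSchrodingerSolution (fun x => (montgomeryPotential ζ ν).eval x) f →
      Integrable (fun x => f x ^ 2) →
      Integrable (fun x => exp (2 * (b * |x| ^ 3)) * (f x ^ 2 + deriv f x ^ 2)) ∧
        ∫ x, exp (2 * (b * |x| ^ 3)) * (f x ^ 2 + deriv f x ^ 2) ≤ C * ∫ x, f x ^ 2 := by
  have hΦ (x : ℝ) : HasDerivAt (fun x => b * |x| ^ 3) (3 * b * |x| * x) x :=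
    ((hasDerivAt_abs_pow 1 x).const_mul b).congr_deriv (by push_cast; ring)
  refine IsSchrodingerSolution.exists_forall_integral_exp_mul_le (δ := 1 - 3 * b)
    (montgomeryPotential ζ ν).continuous (fun x => (hΦ x).differentiableAt)
    (by linarith) (by linarith) ?_
  filter_upwards [eventually_add_le_eval_montgomeryPotential ζ ν (1 - 3 * b)
    (by linarith : 3 * b < 1)] with x hx
  calc deriv (fun x => b * |x| ^ 3) x ^ 2 = 3 * b * (3 * b * x ^ 4) := by
        rw [(hΦ x).deriv, mul_pow, mul_pow, sq_abs]
        ring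
    _ ≤ 3 * b * ((montgomeryPotential ζ ν).eval x - (1 - 3 * b)) := by
        gcongr
        linarith
    _ = _ := by ring

lemma isSchrodingerSolution_montgomeryPotential {ζ ν : ℝ} {φ : ℝ → ℝ} (hφ : ContDiff ℝ 2 φ)
    (heq : ∀ ρ, -(deriv (deriv φ) ρ) + (ζ + ρ ^ 2) ^ 2 * φ ρ = ν * φ ρ) :
    IsSchrodingerSolution (fun x => (montgomeryPotential ζ ν).eval x) φ where
  differentiable := hφ.differentiable two_ne_zero
  hasDerivAt_deriv x := by
    refine ((hφ.differentiable_deriv_two x).hasDerivAt).congr_deriv ?_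
    rw [eval_montgomeryPotential]
    linarith [heq x]

/-- Lemma A.8: cubic-exponential decay, with all derivatives and
polynomial moments, of `L²` eigenfunctions of the Montgomery operator, with a constant
independent of the eigenfunction. -/
theorem statement18 (ζ ν a : ℝ) (ha : 0 < a) (ha' : a < 1/3) (k : ℕ) :
    ∃ C : ℝ,
      ∀ φ : ℝ → ℝ, ContDiff ℝ 2 φ → Integrable (fun ρ => φ ρ ^ 2) →
        (∀ ρ : ℝ, -(deriv (deriv φ) ρ) + (ζ + ρ ^ 2) ^ 2 * φ ρ = ν * φ ρ) →
        (∫⁻ ρ : ℝ, ENNReal.ofReal (Real.exp (2 * a * |ρ| ^ 3) *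
            (φ ρ ^ 2 + (ρ ^ k * φ ρ) ^ 2 + iteratedDeriv k φ ρ ^ 2)))
          ≤ ENNReal.ofReal (C * ∫ ρ : ℝ, φ ρ ^ 2) := by
  obtain ⟨b, hab, hb⟩ := exists_between ha'
  obtain ⟨K, hK, hpointwise⟩ := IsSchrodingerSolution.exists_exp_mul_sq_iteratedDeriv_le
    (montgomeryPotential ζ ν) hab three_ne_zero k
  obtain ⟨C, hC⟩ := exists_forall_integral_exp_abs_cube_mul_le ζ ν (ha.trans hab) hb
  refine ⟨K * C, fun φ hφ hint heq => ?_⟩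
  have hsol := isSchrodingerSolution_montgomeryPotential hφ heq
  obtain ⟨hweighted, hle⟩ := hC φ hsol hint
  calc _ ≤ ∫⁻ ρ, ENNReal.ofReal
        (K * (exp (2 * (b * |ρ| ^ 3)) * (φ ρ ^ 2 + deriv φ ρ ^ 2))) := by
        refine lintegral_mono fun ρ => ENNReal.ofReal_le_ofReal ?_
        rw [mul_assoc 2 a]
        exact hpointwise φ hsol ρ
    _ = ENNReal.ofReal (K * ∫ ρ, exp (2 * (b * |ρ| ^ 3)) * (φ ρ ^ 2 + deriv φ ρ ^ 2)) := by
        rw [← integral_const_mul, ofReal_integral_eq_lintegral_ofReal (hweighted.const_mul K)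
          (ae_of_all _ fun ρ => by positivity)]
    _ ≤ ENNReal.ofReal (K * C * ∫ ρ, φ ρ ^ 2) := by
        rw [mul_assoc]
        gcongr
end
end
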